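/- Let (F_0, a) be initial data for the completion problem in ℂ^d with k ≥ d, let f : [0,∞) → [0,∞) be strictly convex, and let F = (F_0, G) ∈ C_a(F_0) be a global minimizer of P_f on C_a(F_0), with the associated data λ, μ, c_1 > … > c_p > 0, s_F, K_j, J_j. Then there exist integers 0 = s_0 < s_1 < … < s_{p−1} < s_p = s_F such that K_j = J_j = {s_{j−1}+1,…,s_j} for every j ∈ {1,…,p−1}, K_p = {s_{p−1}+1,…,s_p}, and J_p = {s_{p−1}+1,…,k}. Moreover λ + μ = (c_1·1_{s_1}, c_2·1_{s_2−s_1}, …, c_p·1_{s_p−s_{p−1}}, λ_{s_p+1},…,λ_d), where c_r = P_{s_{r−1}+1, s_r} for every r ∈ {1,…,p−1} and c_p = Q_{s_{p−1}, s_p}. -/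

import Mathlib

open Finset
open scoped ComplexOrder

noncomputable def sortAsc {m : ℕ} (x : Fin m → ℝ) : Fin m → ℝ :=
  x ∘ Tuple.sort x

noncomputable def sortDesc {m : ℕ} (x : Fin m → ℝ) : Fin m → ℝ :=
  fun i => (x ∘ Tuple.sort x) i.rev

noncomputable def pad {k : ℕ} (x : Fin k → ℝ) (m : ℕ) : Fin m → ℝ :=
  fun i => if h : (i : ℕ) < k then x ⟨i, h⟩ else 0

/-- `MajorizedBy x y` means `x ≺ y`. -/
def MajorizedBy {m : ℕ} (x y : Fin m → ℝ) : Prop :=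
  (∀ j : Fin m, ∑ i ∈ Finset.Iic j, sortDesc x i ≤ ∑ i ∈ Finset.Iic j, sortDesc y i) ∧
    ∑ i, x i = ∑ i, y i

/-- Majorization of vectors of possibly different lengths, padding with zeros. -/
def MajorizedByPad {k m : ℕ} (x : Fin k → ℝ) (y : Fin m → ℝ) : Prop :=
  MajorizedBy (pad x (max k m)) (pad y (max k m))

/-- The frame operator `S_F = ∑ f_i f_i^*` of a finite sequence of vectors in `ℂ^d`. -/
noncomputable def frameOp {d n : ℕ} (F : Fin n → Fin d → ℂ) : Matrix (Fin d) (Fin d) ℂ :=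
  ∑ l, Matrix.vecMulVec (F l) (star (F l))

/-- The squared norm `‖g‖²` of a vector in `ℂ^d`. -/
noncomputable def normSqVec {d : ℕ} (g : Fin d → ℂ) : ℝ :=
  ∑ i, Complex.normSq (g i)

open scoped Classical in
/-- Eigenvalues of a (Hermitian) matrix arranged in decreasing order. -/
noncomputable def eigsDesc {d : ℕ} (S : Matrix (Fin d) (Fin d) ℂ) : Fin d → ℝ :=
  if h : S.IsHermitian then sortDesc h.eigenvalues else 0

open scoped Classical in
/-- Eigenvalues of a (Hermitian) matrix arranged in increasing order. -/
noncomputable def eigsAsc {d : ℕ} (S : Matrix (Fin d) (Fin d) ℂ) : Fin d → ℝ :=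
  if h : S.IsHermitian then sortAsc h.eigenvalues else 0

/-- `Γ_d(a)`: non-increasing nonnegative vectors in `ℝ^d` majorizing `a`. -/
def Gamma {k : ℕ} (d : ℕ) (a : Fin k → ℝ) : Set (Fin d → ℝ) :=
  {μ | Antitone μ ∧ (∀ i, 0 ≤ μ i) ∧ MajorizedByPad a μ}

/-- The convex potential `P_f = tr f(S) = ∑ f(λ_i(S))`. -/
noncomputable def potential {d : ℕ} (f : ℝ → ℝ) (S : Matrix (Fin d) (Fin d) ℂ) : ℝ :=
  ∑ i, f (eigsDesc S i)

/-- Final averages `Q_{j,r} = (1/(r-j)) (∑_{i=j+1}^k a_i + ∑_{i=j+1}^r λ_i)` (1-based). -/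
noncomputable def finalAvg {d k : ℕ} (lam : Fin d → ℝ) (a : Fin k → ℝ) (j r : ℕ) : ℝ :=
  ((∑ i : Fin k, if j ≤ (i : ℕ) then a i else 0) +
      (∑ i : Fin d, if j ≤ (i : ℕ) ∧ (i : ℕ) < r then lam i else 0)) / ((r : ℝ) - (j : ℝ))

/-- Initial averages: `initAvg lam a lo hi = P_{lo+1,hi}` (1-based), i.e. the average of
`h_i = λ_i + a_i` over the (0-based) index window `[lo, hi)`. -/
noncomputable def initAvg {d k : ℕ} (lam : Fin d → ℝ) (a : Fin k → ℝ) (lo hi : ℕ) : ℝ :=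
  ((∑ i : Fin d, if lo ≤ (i : ℕ) ∧ (i : ℕ) < hi then lam i else 0) +
      (∑ i : Fin k, if lo ≤ (i : ℕ) ∧ (i : ℕ) < hi then a i else 0)) / ((hi : ℝ) - (lo : ℝ))

/-- 1-based access to a vector indexed by `Fin d`. -/
noncomputable def get1 {d : ℕ} (lam : Fin d → ℝ) (i : ℕ) : ℝ :=
  if h : i - 1 < d then lam ⟨i - 1, h⟩ else 0

/-- The index `s` is feasible for the pair `(λ, a)`: the unique vector
`ν_s = (c·1_{r-s}, λ_{r+1},…,λ_d)` determined by the truncated data satisfies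
`a^s ≺ ν_s - λ^s`. -/
def FeasibleIdx {d k : ℕ} (lam : Fin d → ℝ) (a : Fin k → ℝ) (s : ℕ) : Prop :=
  ∃ r : ℕ, ∃ c : ℝ, s < r ∧ r ≤ d ∧ 0 < c ∧
    (∀ i : Fin d, s ≤ (i : ℕ) → (i : ℕ) < r → lam i ≤ c) ∧
    (∀ hrd : r < d, c ≤ lam ⟨r, hrd⟩) ∧
    ((r : ℝ) - (s : ℝ)) * c =
      (∑ i : Fin d, if s ≤ (i : ℕ) ∧ (i : ℕ) < r then lam i else 0) +
        (∑ i : Fin k, if s ≤ (i : ℕ) then a i else 0) ∧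
    MajorizedByPad (fun i : Fin (k - s) => a ⟨s + (i : ℕ), by have := i.isLt; omega⟩)
      (fun i : Fin (d - s) =>
        if s + (i : ℕ) < r then c - lam ⟨s + (i : ℕ), by have := i.isLt; omega⟩ else 0)


/-- real diagonal matrix, as a complex matrix -/
noncomputable def rdiag {d : ℕ} (α : Fin d → ℝ) : Matrix (Fin d) (Fin d) ℂ :=
  Matrix.diagonal (fun i => (α i : ℂ))

open Matrix in
lemma rdiag_herm {d : ℕ} (α : Fin d → ℝ) : (rdiag α)ᴴ = rdiag α := by
  unfold rdiag
  rw [diagonal_conjTranspose]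
  congr 1
  ext i
  simp

open Matrix in
lemma herm_conj {d : ℕ} (U : Matrix (Fin d) (Fin d) ℂ) (α : Fin d → ℝ) :
    (U * rdiag α * Uᴴ).IsHermitian := by
  unfold Matrix.IsHermitian
  rw [conjTranspose_mul, conjTranspose_mul, conjTranspose_conjTranspose, Matrix.mul_assoc,
    rdiag_herm]

open Matrix in
lemma eigs_of_conj {d : ℕ} (U : Matrix (Fin d) (Fin d) ℂ) (hU : Uᴴ * U = 1) (α : Fin d → ℝ)
    (A : Matrix (Fin d) (Fin d) ℂ) (hA : A = U * rdiag α * Uᴴ) (hH : A.IsHermitian) :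
    Multiset.map hH.eigenvalues Finset.univ.val = Multiset.map α Finset.univ.val := by
  have h1 : A.charpoly = ∏ i, (Polynomial.X - Polynomial.C (α i : ℂ)) := by
    rw [hA, charpoly_mul_comm, ← Matrix.mul_assoc, hU, Matrix.one_mul, rdiag, charpoly_diagonal]
  have h2 := hH.roots_charpoly_eq_eigenvalues
  have h0 : ∏ i, (Polynomial.X - Polynomial.C (α i : ℂ)) =
      (Multiset.map (fun z : ℂ => Polynomial.X - Polynomial.C z)
        (Multiset.map (fun i => (α i : ℂ)) Finset.univ.val)).prod := by
    rw [Multiset.map_map]; rfl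
  rw [h1, h0, Polynomial.roots_multiset_prod_X_sub_C] at h2
  have := congrArg (Multiset.map Complex.re) h2
  simpa [Function.comp_def] using this.symm

lemma ofFn_perm_of_map {d : ℕ} {x y : Fin d → ℝ}
    (h : Multiset.map x Finset.univ.val = Multiset.map y Finset.univ.val) :
    (List.ofFn x).Perm (List.ofFn y) := by
  rw [← Multiset.coe_eq_coe]
  simpa [Fin.univ_val_map] using h

lemma mono_unique {d : ℕ} {x y : Fin d → ℝ} (hx : Monotone x) (hy : Monotone y)
    (h : Multiset.map x Finset.univ.val = Multiset.map y Finset.univ.val) : x = y :=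
  List.ofFn_injective <| (ofFn_perm_of_map h).eq_of_pairwise'
    hx.sortedLE_ofFn.pairwise hy.sortedLE_ofFn.pairwise

lemma anti_unique {d : ℕ} {x y : Fin d → ℝ} (hx : Antitone x) (hy : Antitone y)
    (h : Multiset.map x Finset.univ.val = Multiset.map y Finset.univ.val) : x = y :=
  List.ofFn_injective <| (ofFn_perm_of_map h).eq_of_pairwise'
    hx.sortedGE_ofFn.pairwise hy.sortedGE_ofFn.pairwise

lemma map_perm_univ {d : ℕ} (x : Fin d → ℝ) (σ : Equiv.Perm (Fin d)) :
    Multiset.map (x ∘ σ) Finset.univ.val = Multiset.map x Finset.univ.val := by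
  rw [← Multiset.map_map, Multiset.map_univ_val_equiv]

lemma sortDesc_eq {d : ℕ} (x : Fin d → ℝ) :
    sortDesc x = x ∘ (Fin.revPerm.trans (Tuple.sort x)) := by
  ext i; simp [sortDesc]

lemma sortDesc_anti {d : ℕ} (x : Fin d → ℝ) : Antitone (sortDesc x) := by
  intro i j hij
  exact Tuple.monotone_sort x (Fin.rev_le_rev.mpr hij)

open Matrix in
lemma eigsAsc_conj {d : ℕ} (U : Matrix (Fin d) (Fin d) ℂ) (hU : Uᴴ * U = 1) (α : Fin d → ℝ)
    (hα : Monotone α) : eigsAsc (U * rdiag α * Uᴴ) = α := by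
  have hH := herm_conj U α
  rw [eigsAsc, dif_pos hH]
  apply mono_unique (Tuple.monotone_sort _) hα
  have := map_perm_univ hH.eigenvalues (Tuple.sort hH.eigenvalues)
  rw [eigs_of_conj U hU α _ rfl hH] at this
  exact this

open Matrix in
lemma eigsDesc_map {d : ℕ} (U : Matrix (Fin d) (Fin d) ℂ) (hU : Uᴴ * U = 1) (α : Fin d → ℝ) :
    Multiset.map (eigsDesc (U * rdiag α * Uᴴ)) Finset.univ.val 
      = Multiset.map α Finset.univ.val := by
  have hH := herm_conj U α
  rw [eigsDesc, dif_pos hH, sortDesc_eq, map_perm_univ, eigs_of_conj U hU α _ rfl hH]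

open Matrix in
lemma eigsDesc_conj {d : ℕ} (U : Matrix (Fin d) (Fin d) ℂ) (hU : Uᴴ * U = 1) (α : Fin d → ℝ)
    (hα : Antitone α) : eigsDesc (U * rdiag α * Uᴴ) = α := by
  have hH := herm_conj U α
  refine anti_unique ?_ hα (eigsDesc_map U hU α)
  rw [eigsDesc, dif_pos hH]
  exact sortDesc_anti _

open Matrix in
lemma potential_conj {d : ℕ} (f : ℝ → ℝ) (U : Matrix (Fin d) (Fin d) ℂ) (hU : Uᴴ * U = 1)
    (α : Fin d → ℝ) : potential f (U * rdiag α * Uᴴ) = ∑ i, f (α i) := by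
  have h := congrArg (fun s => (Multiset.map f s).sum) (eigsDesc_map U hU α)
  simpa [potential, Finset.sum_eq_multiset_sum, Function.comp_def] using h

open Matrix in
lemma potential_rdiag {d : ℕ} (f : ℝ → ℝ) 
    (α : Fin d → ℝ) : potential f (rdiag α) = ∑ i, f (α i) := by
  have := potential_conj f (1 : Matrix (Fin d) (Fin d) ℂ) (by simp) α
  simpa using this

open Matrix in
/-- single spectral theorem -/
lemma spec1 {d : ℕ} (A : Matrix (Fin d) (Fin d) ℂ) (hA : Aᴴ = A) :
    ∃ (U : Matrix (Fin d) (Fin d) ℂ) (α : Fin d → ℝ), Uᴴ * U = 1 ∧ U * Uᴴ = 1 ∧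
      A = U * rdiag α * Uᴴ := by
  have hA' : A.IsHermitian := hA
  refine ⟨hA'.eigenvectorUnitary, hA'.eigenvalues, ?_, ?_, ?_⟩
  · exact Unitary.coe_star_mul_self hA'.eigenvectorUnitary
  · exact Unitary.coe_mul_star_self hA'.eigenvectorUnitary
  · have := hA'.spectral_theorem
    rw [Unitary.conjStarAlgAut_apply] at this
    exact this

open Matrix in
lemma potential_unitary {d : ℕ} (f : ℝ → ℝ) (V A : Matrix (Fin d) (Fin d) ℂ) (hV : Vᴴ * V = 1)
    (hA : Aᴴ = A) : potential f (V * A * Vᴴ) = potential f A := by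
  obtain ⟨U, α, h1, h2, h3⟩ := spec1 A hA
  have : V * A * Vᴴ = (V * U) * rdiag α * (V * U)ᴴ := by
    rw [h3, conjTranspose_mul]; simp only [Matrix.mul_assoc]
  rw [this, potential_conj, h3, potential_conj _ _ h1]
  rw [conjTranspose_mul, Matrix.mul_assoc, ← Matrix.mul_assoc _ V, hV, Matrix.one_mul, h1]

open Matrix Module.End in
/-- simultaneous diagonalization -/
lemma spec2 {d : ℕ} (A B : Matrix (Fin d) (Fin d) ℂ) (hA : Aᴴ = A) (hB : Bᴴ = B)
    (hAB : A * B = B * A) :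
    ∃ (U : Matrix (Fin d) (Fin d) ℂ) (α β : Fin d → ℝ), Uᴴ * U = 1 ∧ U * Uᴴ = 1 ∧
      A = U * rdiag α * Uᴴ ∧ B = U * rdiag β * Uᴴ := by
  classical
  have sA : (toEuclideanLin A).IsSymmetric := isSymmetric_toEuclideanLin_iff.mpr hA
  have sB : (toEuclideanLin B).IsSymmetric := isSymmetric_toEuclideanLin_iff.mpr hB
  have hc : Commute (toEuclideanLin A) (toEuclideanLin B) := by
    unfold Commute SemiconjBy
    ext x i
    simp [toLpLin_apply, hAB]
  have h1 := LinearMap.IsSymmetric.directSum_isInternal_of_commute sA sB hc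
  have h2 := LinearMap.IsSymmetric.orthogonalFamily_eigenspace_inf_eigenspace sA sB
  have h3 := DirectSum.isInternal_ne_bot_iff.mpr h1
  have hft := h1.submodule_iSupIndep.fintypeNeBotOfFiniteDimensional
  have h4 := h2.comp (γ := {i : ℂ × ℂ // (eigenspace (toEuclideanLin A) i.2 ⊓ eigenspace (toEuclideanLin B) i.1) ≠ ⊥}) (f := Subtype.val) Subtype.val_injective
  have hn : Module.finrank ℂ (EuclideanSpace ℂ (Fin d)) = d := by simp
  let b := h3.subordinateOrthonormalBasis hn h4
  let ix := fun a => h3.subordinateOrthonormalBasisIndex hn a h4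
  have hb : ∀ a, b a ∈ eigenspace (toEuclideanLin A) (ix a).1.2 ⊓ eigenspace (toEuclideanLin B) (ix a).1.1 :=
    fun a => h3.subordinateOrthonormalBasis_subordinate hn a h4
  let U : Matrix (Fin d) (Fin d) ℂ := (EuclideanSpace.basisFun (Fin d) ℂ).toBasis.toMatrix b.toBasis
  have hU := (EuclideanSpace.basisFun (Fin d) ℂ).toMatrix_orthonormalBasis_mem_unitary b
  have hU1 : Uᴴ * U = 1 := hU.1
  have hU2 : U * Uᴴ = 1 := hU.2
  have hUe : ∀ i j, U i j = b j i := by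
    intro i j
    simp [U, Module.Basis.toMatrix_apply]
  have key : ∀ (M : Matrix (Fin d) (Fin d) ℂ) (hM : Mᴴ = M) (γ : Fin d → ℂ),
      (∀ a, toEuclideanLin M (b a) = γ a • b a) → M = U * rdiag (fun i => (γ i).re) * Uᴴ := by
    intro M hM γ h
    have e1 : M * U = U * diagonal γ := by
      ext i j
      rw [mul_diagonal, Matrix.mul_apply]
      have := congrArg (fun v : EuclideanSpace ℂ (Fin d) => v i) (h j)
      simp only [toLpLin_apply] at this
      simp only [hUe]
      simpa [mulVec, dotProduct, mul_comm] using this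
    have e2 : M = U * diagonal γ * Uᴴ := by
      rw [← e1, Matrix.mul_assoc, hU2, Matrix.mul_one]
    have e3 : Uᴴ * M * U = diagonal γ := by
      rw [Matrix.mul_assoc, e1, ← Matrix.mul_assoc, hU1, Matrix.one_mul]
    have e4 : (diagonal γ)ᴴ = diagonal γ := by
      rw [← e3]; simp [conjTranspose_mul, hM, Matrix.mul_assoc]
    have e5 : ∀ i, ((γ i).re : ℂ) = γ i := by
      intro i
      have := congrFun (congrFun e4 i) i
      simp only [conjTranspose_apply, diagonal_apply_eq] at this
      exact Complex.conj_eq_iff_re.mp this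
    rw [e2]; unfold rdiag; simp only [e5]
  refine ⟨U, fun i => ((ix i).1.2).re, fun i => ((ix i).1.1).re, hU1, hU2, ?_, ?_⟩
  · exact key A hA (fun a => (ix a).1.2) fun a => mem_eigenspace_iff.mp (hb a).1
  · exact key B hB (fun a => (ix a).1.1) fun a => mem_eigenspace_iff.mp (hb a).2


lemma normSqVec_dot {d : ℕ} (y : Fin d → ℂ) : star y ⬝ᵥ y = (normSqVec y : ℂ) := by
  simp [normSqVec, dotProduct, Complex.normSq_eq_conj_mul_self]

open Matrix in
lemma normSqVec_unitary {d : ℕ} (U : Matrix (Fin d) (Fin d) ℂ) (hU : Uᴴ * U = 1) (y : Fin d → ℂ) :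
    normSqVec (U *ᵥ y) = normSqVec y := by
  have : star (U *ᵥ y) ⬝ᵥ (U *ᵥ y) = star y ⬝ᵥ y := by
    rw [star_mulVec, ← dotProduct_mulVec, mulVec_mulVec, hU, one_mulVec]
  rw [normSqVec_dot, normSqVec_dot] at this
  exact_mod_cast this

open Matrix in
lemma conj_vecMulVec {d : ℕ} (U : Matrix (Fin d) (Fin d) ℂ) (y z : Fin d → ℂ) :
    U * vecMulVec y (star z) * Uᴴ = vecMulVec (U *ᵥ y) (star (U *ᵥ z)) := by
  rw [mul_vecMulVec, vecMulVec_mul, star_mulVec]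

open Matrix in
lemma frameOp_conj {d n : ℕ} (U : Matrix (Fin d) (Fin d) ℂ) (G : Fin n → Fin d → ℂ) :
    frameOp (fun l => U *ᵥ G l) = U * frameOp G * Uᴴ := by
  simp only [frameOp, Matrix.mul_sum, Matrix.sum_mul, conj_vecMulVec]

open Matrix in
lemma frameOp_herm {d n : ℕ} (G : Fin n → Fin d → ℂ) : (frameOp G)ᴴ = frameOp G := by
  simp only [frameOp, conjTranspose_sum, conjTranspose_vecMulVec, star_star]

open Matrix in
lemma frameOp_psd {d n : ℕ} (G : Fin n → Fin d → ℂ) : (frameOp G).PosSemidef := by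
  unfold frameOp
  exact Matrix.posSemidef_sum _ fun i _ => posSemidef_vecMulVec_self_star _

open Matrix in
lemma eig_nonneg {d : ℕ} (S U : Matrix (Fin d) (Fin d) ℂ) (ν : Fin d → ℝ) (hU : Uᴴ * U = 1)
    (hS : S.PosSemidef) (h : S = U * rdiag ν * Uᴴ) (i : Fin d) : 0 ≤ ν i := by
  have h1 := hS.conjTranspose_mul_mul_same U
  have h2 : Uᴴ * S * U = rdiag ν := by
    rw [h]; simp only [Matrix.mul_assoc, hU, Matrix.mul_one]; rw [← Matrix.mul_assoc, hU, Matrix.one_mul]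
  rw [h2] at h1
  have := h1.diag_nonneg (i := i)
  simpa [rdiag] using this

open Matrix in
lemma jensen_block {d : ℕ} (f : ℝ → ℝ) (hf : StrictConvexOn ℝ (Set.Ici 0) f)
    (ν : Fin d → ℝ) (hν : ∀ i, 0 ≤ ν i) (i1 i2 : Fin d) (h12 : ν i2 < ν i1) (δ : ℝ) (b : ℂ)
    (hδ : 0 < δ) (hb : Complex.normSq b + δ ^ 2 < δ * (ν i1 - ν i2)) :
    potential f (rdiag ν + (-(δ : ℂ)) • Matrix.single i1 i1 1 + (δ : ℂ) • Matrix.single i2 i2 1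
      + b • Matrix.single i1 i2 1 + (star b) • Matrix.single i2 i1 1) < ∑ i, f (ν i) := by
  have hne : i1 ≠ i2 := by rintro rfl; exact lt_irrefl _ h12
  set S := rdiag ν + (-(δ : ℂ)) • Matrix.single i1 i1 1 + (δ : ℂ) • Matrix.single i2 i2 1
      + b • Matrix.single i1 i2 1 + (star b) • Matrix.single i2 i1 1 with hS
  have hH : Sᴴ = S := by
    rw [hS]; simp [conjTranspose_add, conjTranspose_smul, rdiag_herm]
    abel
  obtain ⟨U, s, hU1, hU2, hs⟩ := spec1 S hH
  rw [hs, potential_conj f U hU1]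
  set D := ν i1 - ν i2 with hD
  have hDpos : 0 < D := by rw [hD]; linarith
  -- quadratic form
  set t : Fin d → ℝ := fun m => -δ * Complex.normSq (U i1 m) + δ * Complex.normSq (U i2 m)
    + 2 * (b * star (U i1 m) * U i2 m).re with ht
  have hsm : ∀ m, s m = ∑ i, Complex.normSq (U i m) * ν i + t m := by
    intro m
    have e : rdiag s = Uᴴ * S * U := by
      rw [hs]; simp only [Matrix.mul_assoc, hU1, Matrix.mul_one]; rw [← Matrix.mul_assoc, hU1, Matrix.one_mul]
    have e1 : (s m : ℂ) = (Uᴴ * S * U) m m := by rw [← e]; simp [rdiag]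
    rw [hS] at e1
    simp only [Matrix.mul_add, Matrix.add_mul, Matrix.add_apply, Matrix.mul_smul, Matrix.smul_mul, Matrix.smul_apply] at e1
    have e2 : ∀ p q : Fin d, (Uᴴ * Matrix.single p q (1:ℂ) * U) m m = star (U p m) * U q m := by
      intro p q
      rw [Matrix.mul_apply, Finset.sum_eq_single q]
      · simp
      · intro x _ hx
        rw [Matrix.mul_single_apply_of_ne _ _ _ _ _ hx]; simp
      · simp
    have e3 : (Uᴴ * rdiag ν * U) m m = ((∑ i, Complex.normSq (U i m) * ν i : ℝ) : ℂ) := by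
      rw [Matrix.mul_apply]
      push_cast
      refine Finset.sum_congr rfl fun i _ => ?_
      simp [rdiag, Matrix.mul_diagonal, Complex.normSq_eq_conj_mul_self]
      ring
    rw [e2, e2, e2, e2, e3] at e1
    have := congrArg Complex.re e1
    simp only [Complex.add_re, Complex.ofReal_re] at this
    rw [this, ht]
    simp [Complex.normSq_apply]
    ring
  have hcol : ∀ m, ∑ i, Complex.normSq (U i m) = 1 := by
    intro m
    have := congrFun (congrFun hU1 m) m
    rw [Matrix.mul_apply] at this
    simp only [conjTranspose_apply, one_apply_eq] at this
    have h := congrArg Complex.re this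
    simpa [Complex.normSq_apply] using h
  have hrow : ∀ i j, ∑ m, (star (U i m) * U j m) = if i = j then 1 else 0 := by
    intro i j
    have := congrFun (congrFun hU2 j) i
    rw [Matrix.mul_apply] at this
    simp only [conjTranspose_apply, one_apply] at this
    rw [show (if i = j then (1:ℂ) else 0) = if j = i then 1 else 0 by simp [eq_comm], ← this]
    exact Finset.sum_congr rfl fun m _ => mul_comm _ _
  have hrow1 : ∀ i, ∑ m, Complex.normSq (U i m) = 1 := by
    intro i
    have h := congrArg Complex.re (hrow i i)
    simpa [Complex.normSq_apply] using h
  have htsum : ∑ m, t m = 0 := by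
    simp only [ht]
    rw [Finset.sum_add_distrib, Finset.sum_add_distrib, ← Finset.mul_sum, ← Finset.mul_sum,
      ← Finset.mul_sum, hrow1, hrow1, ← Complex.re_sum]
    have : ∑ m, b * star (U i1 m) * U i2 m = 0 := by
      simp only [mul_assoc]
      rw [← Finset.mul_sum, hrow, if_neg hne, mul_zero]
    rw [this]; simp
  -- the doubly stochastic weights
  set w : Fin d → Fin d → ℝ := fun m i => Complex.normSq (U i m) +
    (t m / D) * ((if i = i1 then 1 else 0) - (if i = i2 then 1 else 0)) with hw
  have hwsum : ∀ m, ∑ i, w m i = 1 := by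
    intro m
    simp only [hw, Finset.sum_add_distrib, ← Finset.mul_sum, Finset.sum_sub_distrib, hcol]
    simp
  have hwcol : ∀ i, ∑ m, w m i = 1 := by
    intro i
    simp only [hw, Finset.sum_add_distrib, ← Finset.sum_mul, ← Finset.sum_div, hrow1, htsum]
    simp
  have hwν : ∀ m, ∑ i, w m i * ν i = s m := by
    intro m
    rw [hsm]
    simp only [hw, add_mul, Finset.sum_add_distrib]
    congr 1
    simp only [mul_assoc, ← Finset.mul_sum, sub_mul, Finset.sum_sub_distrib]
    simp only [ite_mul, one_mul, zero_mul, Finset.sum_ite_eq', Finset.mem_univ, if_true]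
    rw [← hD]; field_simp
  have hcs : ∀ m, ((b * star (U i1 m) * U i2 m).re) ^ 2 ≤
      Complex.normSq b * (Complex.normSq (U i1 m) * Complex.normSq (U i2 m)) := by
    intro m
    have : ((b * star (U i1 m) * U i2 m).re) ^ 2 ≤ Complex.normSq (b * star (U i1 m) * U i2 m) := by
      rw [Complex.normSq_apply]; nlinarith [sq_nonneg (b * star (U i1 m) * U i2 m).im]
    refine this.trans (le_of_eq ?_)
    simp [mul_assoc]
  have hδD : δ < D := by
    have := Complex.normSq_nonneg b
    nlinarith
  -- positivity of the modified weights
  have hquad : ∀ X Y r : ℝ, 0 ≤ X → 0 ≤ Y → r ^ 2 ≤ Complex.normSq b * (X * Y) → 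
      0 ≤ (D - δ) * X + δ * Y + 2 * r ∧ (0 < X → 0 < (D - δ) * X + δ * Y + 2 * r) ∧
      (0 < Y → 0 < (D - δ) * X + δ * Y + 2 * r) := by
    intro X Y r hX hY hr
    have hN := Complex.normSq_nonneg b
    have hXY := mul_nonneg hX hY
    have hp : 0 < D - δ := by linarith
    have k1 : Complex.normSq b < δ * (D - δ) := by nlinarith
    have k2 : r ^ 2 ≤ δ * (D - δ) * (X * Y) := hr.trans (by nlinarith)
    have q1 : 0 ≤ (D - δ) * X + δ * Y := by positivity
    have q2 : (2 * r) ^ 2 ≤ ((D - δ) * X + δ * Y) ^ 2 := by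
      nlinarith [sq_nonneg ((D - δ) * X - δ * Y)]
    have q3 := abs_le_of_sq_le_sq' q2 q1
    have q4 : ∀ (_ : 0 < X ∨ 0 < Y), (2 * r) ^ 2 < ((D - δ) * X + δ * Y) ^ 2 := by
      intro h
      by_cases hz : 0 < X * Y
      · have : r ^ 2 < δ * (D - δ) * (X * Y) := lt_of_le_of_lt hr (by nlinarith)
        nlinarith [sq_nonneg ((D - δ) * X - δ * Y)]
      · have hz0 : X * Y = 0 := le_antisymm (not_lt.mp hz) hXY
        have hr0 : r ^ 2 ≤ 0 := by rw [hz0] at hr; simpa using hr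
        have : 0 < (D - δ) * X + δ * Y := by
          rcases h with h | h
          · have := mul_pos hp h; have := mul_nonneg hδ.le hY; linarith
          · have := mul_pos hδ h; have := mul_nonneg hp.le hX; linarith
        nlinarith [sq_pos_of_pos this]
    have q5 : ∀ (_ : 0 < X ∨ 0 < Y), 0 < (D - δ) * X + δ * Y + 2 * r := fun h => by
      have := (abs_lt_of_sq_lt_sq' (q4 h) q1).1; linarith
    exact ⟨by linarith [q3.1], fun h => q5 (Or.inl h), fun h => q5 (Or.inr h)⟩
  have hw1 : ∀ m, w m i1 = ((D - δ) * Complex.normSq (U i1 m) + δ * Complex.normSq (U i2 m)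
      + 2 * (b * star (U i1 m) * U i2 m).re) / D := by
    intro m
    simp only [hw, ht, if_true, if_neg hne]
    field_simp; ring
  have hw2 : ∀ m, w m i2 = ((D - δ) * Complex.normSq (U i2 m) + δ * Complex.normSq (U i1 m)
      + 2 * (-(b * star (U i1 m) * U i2 m).re)) / D := by
    intro m
    simp only [hw, ht, if_true, if_neg hne.symm]
    field_simp; ring
  have hq1 := fun m => hquad _ _ _ (Complex.normSq_nonneg (U i1 m)) (Complex.normSq_nonneg (U i2 m)) (hcs m)
  have hq2 := fun m => hquad _ _ (-(b * star (U i1 m) * U i2 m).re) (Complex.normSq_nonneg (U i2 m)) (Complex.normSq_nonneg (U i1 m)) (by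
    rw [neg_sq, mul_comm (Complex.normSq (U i2 m))]; exact hcs m)
  have hwn : ∀ m i, 0 ≤ w m i := by
    intro m i
    by_cases h1 : i = i1
    · subst h1; rw [hw1]; exact div_nonneg (hq1 m).1 hDpos.le
    by_cases h2 : i = i2
    · subst h2; rw [hw2]; exact div_nonneg (hq2 m).1 hDpos.le
    simp only [hw, if_neg h1, if_neg h2]
    simpa using Complex.normSq_nonneg _
  have hle : ∀ m, f (s m) ≤ ∑ i, w m i * f (ν i) := by
    intro m
    have := hf.convexOn.map_sum_le (t := Finset.univ) (w := w m) (p := ν) (fun i _ => hwn m i) (hwsum m) (fun i _ => hν i)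
    simpa [hwν] using this
  obtain ⟨m0, hm0⟩ : ∃ m, 0 < Complex.normSq (U i1 m) := by
    by_contra hcon
    push Not at hcon
    have : ∑ m, Complex.normSq (U i1 m) ≤ 0 := Finset.sum_nonpos fun m _ => hcon m
    rw [hrow1] at this; linarith
  have hlt : f (s m0) < ∑ i, w m0 i * f (ν i) := by
    have := (hf.map_sum_lt_iff_of_nonneg (t := Finset.univ) (w := w m0) (p := ν) (fun i _ => hwn m0 i) (hwsum m0) (fun i _ => hν i)).mpr
      ⟨i1, mem_univ _, i2, mem_univ _, ?_, ?_, h12.ne'⟩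
    · simpa [hwν] using this
    · rw [hw1]; exact (div_pos ((hq1 m0).2.1 hm0) hDpos).ne'
    · rw [hw2]; exact (div_pos ((hq2 m0).2.2 hm0) hDpos).ne'
  calc ∑ i, f (s i) < ∑ m, ∑ i, w m i * f (ν i) := 
        Finset.sum_lt_sum (fun m _ => hle m) ⟨m0, mem_univ _, hlt⟩
    _ = ∑ i, f (ν i) := by
        rw [Finset.sum_comm]
        refine Finset.sum_congr rfl fun i _ => ?_
        rw [← Finset.sum_mul, hwcol, one_mul]


open Matrix in
lemma conj_back {d : ℕ} {S U : Matrix (Fin d) (Fin d) ℂ} {ν : Fin d → ℝ} (hU : Uᴴ * U = 1)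
    (h : S = U * rdiag ν * Uᴴ) : Uᴴ * S * U = rdiag ν := by
  rw [h]; simp only [Matrix.mul_assoc, hU, Matrix.mul_one]
  rw [← Matrix.mul_assoc, hU, Matrix.one_mul]

open Matrix in
lemma eig_coord {d : ℕ} {S U : Matrix (Fin d) (Fin d) ℂ} {ν : Fin d → ℝ} (hU : Uᴴ * U = 1)
    (h : S = U * rdiag ν * Uᴴ) {y : Fin d → ℂ} {c : ℝ} (hy : S *ᵥ y = (c : ℂ) • y) (m : Fin d)
    (hm : (Uᴴ *ᵥ y) m ≠ 0) : ν m = c := by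
  have h1 : rdiag ν *ᵥ (Uᴴ *ᵥ y) = (c : ℂ) • (Uᴴ *ᵥ y) := by
    rw [← mulVec_smul, ← hy, h]
    simp only [mulVec_mulVec, ← Matrix.mul_assoc, hU, Matrix.one_mul]
  have h2 := congrFun h1 m
  rw [rdiag, mulVec_diagonal, Pi.smul_apply, smul_eq_mul] at h2
  exact_mod_cast mul_right_cancel₀ hm h2

open Matrix in
lemma vmv_mul_of_eig {d : ℕ} {S : Matrix (Fin d) (Fin d) ℂ} (hS : Sᴴ = S) {y : Fin d → ℂ} {c : ℝ}
    (hy : S *ᵥ y = (c : ℂ) • y) : vecMulVec y (star y) * S = (c : ℂ) • vecMulVec y (star y) ∧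
      S * vecMulVec y (star y) = (c : ℂ) • vecMulVec y (star y) := by
  constructor
  · rw [vecMulVec_mul]
    have : star y ᵥ* S = (c : ℂ) • star y := by
      have := congrArg star hy
      rw [star_mulVec, hS] at this
      simpa using this
    rw [this, vecMulVec_smul]
  · rw [mul_vecMulVec, hy, smul_vecMulVec]

open Matrix in
lemma eig_orth {d : ℕ} {S : Matrix (Fin d) (Fin d) ℂ} (hS : Sᴴ = S) {y z : Fin d → ℂ} {c c' : ℝ}
    (hy : S *ᵥ y = (c : ℂ) • y) (hz : S *ᵥ z = (c' : ℂ) • z) (hc : c ≠ c') : star y ⬝ᵥ z = 0 := by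
  have h1 : star y ⬝ᵥ (S *ᵥ z) = (c' : ℂ) * (star y ⬝ᵥ z) := by rw [hz]; simp
  have h2 : star y ⬝ᵥ (S *ᵥ z) = (c : ℂ) * (star y ⬝ᵥ z) := by
    rw [dotProduct_mulVec]
    have := congrArg star hy
    rw [star_mulVec, hS] at this
    rw [this]; simp
  have h3 : ((c : ℂ) - c') * (star y ⬝ᵥ z) = 0 := by rw [sub_mul, ← h1, ← h2, sub_self]
  rcases mul_eq_zero.mp h3 with h | h
  · exact absurd (by exact_mod_cast sub_eq_zero.mp h) hc
  · exact h

open Matrix in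
lemma vmv_mulVec {d : ℕ} (y x z : Fin d → ℂ) :
    vecMulVec y (star z) *ᵥ x = (star z ⬝ᵥ x) • y := by
  ext i; simp [vecMulVec_mulVec, mul_comm]

open Matrix in
lemma potential_two {d : ℕ} (f : ℝ → ℝ) (hf : StrictConvexOn ℝ (Set.Ici 0) f)
    (S : Matrix (Fin d) (Fin d) ℂ) (hS : S.PosSemidef) (y z : Fin d → ℂ) (c c' : ℝ)
    (hy : S *ᵥ y = (c : ℂ) • y) (hz : S *ᵥ z = (c' : ℂ) • z) (hc : c' < c)
    (P Q b δ : ℝ) (hδ : 0 < δ) (hP : P * normSqVec y = δ) (hQ : Q * normSqVec z = δ)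
    (hNy : 0 < normSqVec y) (hNz : 0 < normSqVec z)
    (hb : b ^ 2 * (normSqVec y * normSqVec z) + δ ^ 2 < δ * (c - c')) :
    potential f (S - (P : ℂ) • vecMulVec y (star y) + (Q : ℂ) • vecMulVec z (star z)
      + (b : ℂ) • (vecMulVec y (star z) + vecMulVec z (star y))) < potential f S := by
  set Ny := normSqVec y with hNy'
  set Nz := normSqVec z with hNz'
  have hSh : Sᴴ = S := hS.1
  set H : Matrix (Fin d) (Fin d) ℂ := ((1 / Ny : ℝ) : ℂ) • vecMulVec y (star y)
     + ((2 / Nz : ℝ) : ℂ) • vecMulVec z (star z) with hH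
  have hHh : Hᴴ = H := by
    rw [hH]
    simp only [conjTranspose_add, conjTranspose_smul, conjTranspose_vecMulVec, star_star]
    simp
  have hcomm : S * H = H * S := by
    rw [hH, Matrix.mul_add, Matrix.add_mul, Matrix.mul_smul, Matrix.mul_smul, Matrix.smul_mul,
      Matrix.smul_mul, (vmv_mul_of_eig hSh hy).1, (vmv_mul_of_eig hSh hy).2,
      (vmv_mul_of_eig hSh hz).1, (vmv_mul_of_eig hSh hz).2]
  obtain ⟨U, ν, κ, hU1, hU2, hSU, hHU⟩ := spec2 S H hSh hHh hcomm
  have hν := eig_nonneg S U ν hU1 hS hSU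
  have hyz : star y ⬝ᵥ z = 0 := eig_orth hSh hy hz hc.ne'
  have hzy : star z ⬝ᵥ y = 0 := eig_orth hSh hz hy hc.ne
  have hHy : H *ᵥ y = ((1 : ℝ) : ℂ) • y := by
    rw [hH, add_mulVec, smul_mulVec, smul_mulVec, vmv_mulVec, vmv_mulVec, hzy, normSqVec_dot,
      ← hNy', smul_smul, ← Complex.ofReal_mul, one_div_mul_cancel hNy.ne']
    simp
  have hHz : H *ᵥ z = ((2 : ℝ) : ℂ) • z := by
    rw [hH, add_mulVec, smul_mulVec, smul_mulVec, vmv_mulVec, vmv_mulVec, hyz, normSqVec_dot,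
      ← hNz', zero_smul, smul_zero, zero_add, smul_smul, ← Complex.ofReal_mul,
      div_mul_cancel₀ _ hNz.ne']
  have hUU : (Uᴴ)ᴴ * Uᴴ = 1 := by rw [conjTranspose_conjTranspose]; exact hU2
  set y' := Uᴴ *ᵥ y with hy'
  set z' := Uᴴ *ᵥ z with hz'
  have hκy : ∀ m, y' m ≠ 0 → κ m = 1 := fun m hm => eig_coord hU1 hHU hHy m hm
  have hκz : ∀ m, z' m ≠ 0 → κ m = 2 := fun m hm => eig_coord hU1 hHU hHz m hm
  have hνy : ∀ m, y' m ≠ 0 → ν m = c := fun m hm => eig_coord hU1 hSU hy m hm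
  have hνz : ∀ m, z' m ≠ 0 → ν m = c' := fun m hm => eig_coord hU1 hSU hz m hm
  have hny : normSqVec y' = Ny := normSqVec_unitary _ hUU y
  have hnz : normSqVec z' = Nz := normSqVec_unitary _ hUU z
  have hHd : rdiag κ = ((1 / Ny : ℝ) : ℂ) • vecMulVec y' (star y')
     + ((2 / Nz : ℝ) : ℂ) • vecMulVec z' (star z') := by
    rw [← conj_back hU1 hHU, hH, Matrix.mul_add, Matrix.add_mul, Matrix.mul_smul, Matrix.mul_smul,
      Matrix.smul_mul, Matrix.smul_mul]
    have := conj_vecMulVec Uᴴ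
    rw [conjTranspose_conjTranspose] at this
    rw [this, this]
  have hoff : ∀ m n, m ≠ n → ((1 / Ny : ℝ) : ℂ) * (y' m * star (y' n)) +
      ((2 / Nz : ℝ) : ℂ) * (z' m * star (z' n)) = 0 := by
    intro m n hmn
    have := congrFun (congrFun hHd m) n
    rw [rdiag, diagonal_apply_ne _ hmn] at this
    simpa [vecMulVec_apply] using this.symm
  have hexy : ∃ i, y' i ≠ 0 := by
    by_contra hcon
    push Not at hcon
    rw [← hny] at hNy
    simp [normSqVec, hcon] at hNy
  have hexz : ∃ i, z' i ≠ 0 := by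
    by_contra hcon
    push Not at hcon
    rw [← hnz] at hNz
    simp [normSqVec, hcon] at hNz
  obtain ⟨i1, hi1⟩ := hexy
  obtain ⟨i2, hi2⟩ := hexz
  have hys : ∀ n, n ≠ i1 → y' n = 0 := by
    intro n hn
    have hz0 : z' i1 = 0 := by
      by_contra h
      have := hκy i1 hi1; have := hκz i1 h; linarith
    have := hoff i1 n hn.symm
    rw [hz0] at this
    have h0 : ((1 / Ny : ℝ) : ℂ) ≠ 0 := by exact_mod_cast (one_div_pos.mpr hNy).ne'
    simpa [h0, hi1, hNy.ne'] using this
  have hzs : ∀ n, n ≠ i2 → z' n = 0 := by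
    intro n hn
    have hy0 : y' i2 = 0 := by
      by_contra h
      have := hκy i2 h; have := hκz i2 hi2; linarith
    have := hoff i2 n hn.symm
    rw [hy0] at this
    simpa [hi2, hNz.ne'] using this
  have hyS : y' = Pi.single i1 (y' i1) := by
    ext n; by_cases h : n = i1
    · subst h; simp
    · rw [hys n h, Pi.single_eq_of_ne h]
  have hzS : z' = Pi.single i2 (z' i2) := by
    ext n; by_cases h : n = i2
    · subst h; simp
    · rw [hzs n h, Pi.single_eq_of_ne h]
  have hNy1 : Complex.normSq (y' i1) = Ny := by
    rw [← hny, normSqVec, Finset.sum_eq_single i1]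
    · intro n _ hn; rw [hys n hn]; simp
    · simp
  have hNz1 : Complex.normSq (z' i2) = Nz := by
    rw [← hnz, normSqVec, Finset.sum_eq_single i2]
    · intro n _ hn; rw [hzs n hn]; simp
    · simp
  have hν1 := hνy i1 hi1
  have hν2 := hνz i2 hi2
  have hj := jensen_block f hf ν hν i1 i2 (by rw [hν1, hν2]; exact hc) δ
    ((b : ℂ) * (y' i1 * star (z' i2))) hδ (by
      rw [hν1, hν2]
      refine lt_of_le_of_lt (le_of_eq ?_) hb
      simp only [Complex.normSq_mul, Complex.normSq_ofReal, Complex.star_def, Complex.normSq_conj,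
        hNy1, hNz1]
      ring)
  rw [← potential_conj f U hU1 ν, ← hSU] at hj
  refine lt_of_eq_of_lt ?_ hj
  set S2 := S - (P : ℂ) • vecMulVec y (star y) + (Q : ℂ) • vecMulVec z (star z)
      + (b : ℂ) • (vecMulVec y (star z) + vecMulVec z (star y)) with hS2
  have hS2h : S2ᴴ = S2 := by
    rw [hS2]
    simp only [conjTranspose_add, conjTranspose_sub, conjTranspose_smul, conjTranspose_vecMulVec, star_star, hSh]
    simp
    abel
  rw [← potential_unitary f Uᴴ S2 hUU hS2h]
  congr 1
  rw [conjTranspose_conjTranspose, hS2]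
  have hcv := conj_vecMulVec Uᴴ
  rw [conjTranspose_conjTranspose] at hcv
  simp only [Matrix.mul_add, Matrix.add_mul, Matrix.mul_sub, Matrix.sub_mul, Matrix.mul_smul, 
      Matrix.smul_mul, hcv, conj_back hU1 hSU, ← hy', ← hz']
  have vs : ∀ (p q : Fin d) (u v : ℂ), vecMulVec (Pi.single p u) (star (Pi.single q v : Fin d → ℂ)) =
      (u * star v) • Matrix.single p q (1:ℂ) := by
    intro p q u v
    ext i j
    rw [vecMulVec_apply, Matrix.smul_apply, Matrix.single_apply, Pi.star_apply]
    by_cases hi : p = i <;> by_cases hj : q = j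
    · subst hi; subst hj; simp
    · subst hi; simp [hj, Pi.single_eq_of_ne (Ne.symm hj)]
    · subst hj; simp [hi, Pi.single_eq_of_ne (Ne.symm hi)]
    · simp [hi, Pi.single_eq_of_ne (Ne.symm hi)]
  rw [hyS, hzS]
  simp only [vs, Pi.single_eq_same, smul_smul, smul_add]
  have e1 : (P : ℂ) * (y' i1 * star (y' i1)) = δ := by
    rw [← hP, ← hNy1, Complex.star_def, Complex.mul_conj]; push_cast; ring
  have e2 : (Q : ℂ) * (z' i2 * star (z' i2)) = δ := by
    rw [← hQ, ← hNz1, Complex.star_def, Complex.mul_conj]; push_cast; ring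
  rw [e1, e2]
  have e3 : star ((b : ℂ) * (y' i1 * star (z' i2))) = (b : ℂ) * (z' i2 * star (y' i1)) := by
    simp only [star_mul', star_star, Complex.star_def, Complex.conj_ofReal, Complex.conj_conj, map_mul]
    ring
  rw [e3, neg_smul]
  abel


open Matrix in
lemma potential_multi {d k : ℕ} (f : ℝ → ℝ) (hf : StrictConvexOn ℝ (Set.Ici 0) f)
    (S : Matrix (Fin d) (Fin d) ℂ) (hS : S.PosSemidef) (g : Fin k → Fin d → ℂ) (r : Fin k → ℝ)
    (w : Fin d → ℂ) (c c' τ : ℝ) (hr : ∀ l, 0 ≤ r l)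
    (hg : ∀ l, r l ≠ 0 → S *ᵥ g l = (c : ℂ) • g l) (hw : S *ᵥ w = (c' : ℂ) • w)
    (hwn : normSqVec w = 1) (hτ : τ = ∑ l, r l * normSqVec (g l)) (hτ0 : 0 < τ)
    (hτc : τ < c - c') :
    potential f (S - ∑ l, (r l : ℂ) • vecMulVec (g l) (star (g l))
      + (τ : ℂ) • vecMulVec w (star w)) < potential f S := by
  have hSh : Sᴴ = S := hS.1
  set S2 := S - ∑ l, (r l : ℂ) • vecMulVec (g l) (star (g l))
      + (τ : ℂ) • vecMulVec w (star w) with hS2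
  have hS2h : S2ᴴ = S2 := by
    rw [hS2]
    simp only [conjTranspose_add, conjTranspose_sub, conjTranspose_smul, conjTranspose_sum,
      conjTranspose_vecMulVec, star_star, hSh, Complex.star_def, Complex.conj_ofReal]
  have hcomm : S * S2 = S2 * S := by
    rw [hS2, Matrix.mul_add, Matrix.add_mul, Matrix.mul_sub, Matrix.sub_mul, Matrix.mul_sum,
      Matrix.sum_mul, Matrix.mul_smul, Matrix.smul_mul, (vmv_mul_of_eig hSh hw).1,
      (vmv_mul_of_eig hSh hw).2]
    congr 2
    refine Finset.sum_congr rfl fun l _ => ?_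
    by_cases h : r l = 0
    · simp [h]
    · rw [Matrix.mul_smul, Matrix.smul_mul, (vmv_mul_of_eig hSh (hg l h)).1,
        (vmv_mul_of_eig hSh (hg l h)).2]
  obtain ⟨U, ν, s, hU1, hU2, hSU, hS2U⟩ := spec2 S S2 hSh hS2h hcomm
  have hν := eig_nonneg S U ν hU1 hS hSU
  have hUU : (Uᴴ)ᴴ * Uᴴ = 1 := by rw [conjTranspose_conjTranspose]; exact hU2
  set β : Fin d → ℝ := fun m => ∑ l, r l * Complex.normSq ((Uᴴ *ᵥ g l) m) with hβ
  set x : Fin d → ℝ := fun m => Complex.normSq ((Uᴴ *ᵥ w) m) with hx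
  have hcv := conj_vecMulVec Uᴴ
  rw [conjTranspose_conjTranspose] at hcv
  have hs : ∀ m, s m = ν m - β m + τ * x m := by
    intro m
    have h1 := conj_back hU1 hS2U
    rw [hS2] at h1
    simp only [Matrix.mul_add, Matrix.add_mul, Matrix.mul_sub, Matrix.sub_mul, Matrix.mul_sum,
      Matrix.sum_mul, Matrix.mul_smul, Matrix.smul_mul, hcv, conj_back hU1 hSU] at h1
    have h2 := congrArg Complex.re (congrFun (congrFun h1 m) m)
    simp [rdiag, Matrix.sum_apply, vecMulVec_apply, Complex.mul_conj, -Complex.ofReal_mul] at h2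
    rw [← h2, hβ, hx]
  have hxn : ∀ m, 0 ≤ x m := fun m => Complex.normSq_nonneg _
  have hβn : ∀ m, 0 ≤ β m := fun m => Finset.sum_nonneg fun l _ =>
    mul_nonneg (hr l) (Complex.normSq_nonneg _)
  have hxs : ∑ m, x m = 1 := by
    rw [← hwn, ← normSqVec_unitary Uᴴ hUU w]; rfl
  have hβs : ∑ m, β m = τ := by
    rw [hτ, hβ, Finset.sum_comm]
    refine Finset.sum_congr rfl fun l _ => ?_
    rw [← Finset.mul_sum, ← normSqVec_unitary Uᴴ hUU (g l)]; rfl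
  have hxc : ∀ m, x m ≠ 0 → ν m = c' := fun m hm => eig_coord hU1 hSU hw m (by
    intro h; exact hm (by simp [hx, h]))
  have hβc : ∀ m, β m ≠ 0 → ν m = c := fun m hm => by
    obtain ⟨l, _, hl⟩ := Finset.exists_ne_zero_of_sum_ne_zero hm
    exact eig_coord hU1 hSU (hg l (left_ne_zero_of_mul hl)) m (by
      intro h; exact hl (by simp [h]))
  have hx1 : ∀ m, x m ≤ 1 := fun m => by
    rw [← hxs]; exact Finset.single_le_sum (fun i _ => hxn i) (mem_univ m)
  have hβ1 : ∀ m, β m ≤ τ := fun m => by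
    rw [← hβs]; exact Finset.single_le_sum (fun i _ => hβn i) (mem_univ m)
  have hc' : 0 ≤ c' := by
    obtain ⟨m, _, hm⟩ := Finset.exists_ne_zero_of_sum_ne_zero (by rw [hxs]; exact one_ne_zero)
    rw [← hxc m hm]; exact hν m
  have hlt : ∀ x y a b : ℝ, 0 ≤ x → 0 ≤ y → x ≠ y → 0 < a → 0 < b → a + b = 1 →
      f (a * x + b * y) < a * f x + b * f y := fun x y a b h1 h2 h3 h4 h5 h6 => hf.2 h1 h2 h3 h4 h5 h6
  have hle : ∀ x y a b : ℝ, 0 ≤ x → 0 ≤ y → 0 ≤ a → 0 ≤ b → a + b = 1 →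
      f (a * x + b * y) ≤ a * f x + b * f y := fun x y a b h1 h2 h4 h5 h6 =>
        hf.convexOn.2 h1 h2 h4 h5 h6
  set A := f c - f (c - τ) with hA
  set B := f (c' + τ) - f c' with hB
  have hBA : B < A := by
    have hD : 0 < c - c' := by linarith
    have hθ : 0 < τ / (c - c') := by positivity
    have hθ1 : τ / (c - c') < 1 := by rw [div_lt_one hD]; exact hτc
    have k1 := hlt c c' (1 - τ / (c - c')) (τ / (c - c')) (by linarith) hc' (by linarith) (by linarith) hθ (by ring)
    have k2 := hlt c c' (τ / (c - c')) (1 - τ / (c - c')) (by linarith) hc' (by linarith) hθ (by linarith) (by ring)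
    have e1 : (1 - τ / (c - c')) * c + τ / (c - c') * c' = c - τ := by field_simp; ring
    have e2 : τ / (c - c') * c + (1 - τ / (c - c')) * c' = c' + τ := by field_simp; ring
    rw [e1] at k1; rw [e2] at k2
    rw [hA, hB]; linarith
  have hpt : ∀ m, f (s m) ≤ f (ν m) - (β m / τ) * A + x m * B := by
    intro m
    rw [hs]
    by_cases h1 : β m = 0
    · rw [h1]
      by_cases h2 : x m = 0
      · simp [h2]
      · rw [hxc m h2]
        have := hle c' (c' + τ) (1 - x m) (x m) hc' (by linarith) (by linarith [hx1 m]) (hxn m) (by ring)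
        rw [show (1 - x m) * c' + x m * (c' + τ) = c' - 0 + τ * x m by ring] at this
        rw [hB]; simp only [zero_div]; linarith
    · have hx0 : x m = 0 := by
        by_contra h
        have := hxc m h; have := hβc m h1; linarith
      rw [hβc m h1, hx0]
      have := hle c (c - τ) (1 - β m / τ) (β m / τ) (by linarith) (by linarith) (by
            rw [sub_nonneg, div_le_one hτ0]; exact hβ1 m) (div_nonneg (hβn m) hτ0.le) (by ring)
      rw [show (1 - β m / τ) * c + β m / τ * (c - τ) = c - β m + τ * 0 by field_simp; ring] at this
      rw [hA]; linarith
  rw [hS2U, potential_conj f U hU1 s]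
  conv_rhs => rw [hSU, potential_conj f U hU1 ν]
  calc ∑ m, f (s m) ≤ ∑ m, (f (ν m) - (β m / τ) * A + x m * B) := Finset.sum_le_sum fun m _ => hpt m
    _ = ∑ m, f (ν m) - A + B := by
      rw [Finset.sum_add_distrib, Finset.sum_sub_distrib, ← Finset.sum_mul, ← Finset.sum_mul,
        ← Finset.sum_div, hβs, hxs, div_self hτ0.ne']; ring
    _ < _ := by linarith


open Matrix in
lemma normSqVec_comb {d : ℕ} (y z : Fin d → ℂ) (hyz : star y ⬝ᵥ z = 0) (hzy : star z ⬝ᵥ y = 0)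
    (p q : ℝ) : normSqVec ((p : ℂ) • y + (q : ℂ) • z) = p ^ 2 * normSqVec y + q ^ 2 * normSqVec z := by
  have := normSqVec_dot ((p : ℂ) • y + (q : ℂ) • z)
  simp only [star_add, star_smul, add_dotProduct, dotProduct_add, smul_dotProduct, dotProduct_smul,
    hyz, hzy, normSqVec_dot, Complex.star_def, Complex.conj_ofReal, smul_eq_mul] at this
  have h2 : ((p ^ 2 * normSqVec y + q ^ 2 * normSqVec z : ℝ) : ℂ) = 
    (normSqVec ((p : ℂ) • y + (q : ℂ) • z) : ℝ) := by
    rw [← this]; push_cast; ring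
  exact_mod_cast h2.symm

open Matrix in
lemma vmv_comb {d : ℕ} (y z : Fin d → ℂ) (p q : ℝ) :
    vecMulVec ((p : ℂ) • y + (q : ℂ) • z) (star ((p : ℂ) • y + (q : ℂ) • z)) =
    ((p ^ 2 : ℝ) : ℂ) • vecMulVec y (star y) + ((q ^ 2 : ℝ) : ℂ) • vecMulVec z (star z)
      + ((p * q : ℝ) : ℂ) • (vecMulVec y (star z) + vecMulVec z (star y)) := by
  ext i j
  simp [vecMulVec_apply]
  ring

open Matrix in
lemma frameOp_update {d k : ℕ} (G : Fin k → Fin d → ℂ) (l : Fin k) (v : Fin d → ℂ) :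
    frameOp (Function.update G l v) = frameOp G - vecMulVec (G l) (star (G l))
      + vecMulVec v (star v) := by
  unfold frameOp
  rw [← Finset.add_sum_erase _ _ (mem_univ l), ← Finset.add_sum_erase univ (fun l => vecMulVec (G l) (star (G l))) (mem_univ l)]
  rw [Finset.sum_congr rfl (g := fun l => vecMulVec (G l) (star (G l)))]
  · simp only [Function.update_self]; abel
  · intro x hx
    rw [Function.update_of_ne (Finset.ne_of_mem_erase hx)]

lemma exists_small (N K D : ℝ) (hN : 0 < N) (hK : 0 < K) (hD : 0 < D) :
    ∃ δ : ℝ, 0 < δ ∧ δ ≤ 1 ∧ δ ≤ N ∧ δ * K < D := by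
  refine ⟨min 1 (min N (D / (2 * K))), by positivity, min_le_left _ _,
    (min_le_right _ _).trans (min_le_left _ _), ?_⟩
  have : min 1 (min N (D / (2 * K))) ≤ D / (2 * K) := (min_le_right _ _).trans (min_le_right _ _)
  calc _ ≤ D / (2 * K) * K := by gcongr
    _ = D / 2 := by field_simp
    _ < D := by linarith

open Matrix in
lemma lemD {d k : ℕ} (f : ℝ → ℝ) (hf : StrictConvexOn ℝ (Set.Ici 0) f)
    (S0 : Matrix (Fin d) (Fin d) ℂ) (hS0 : S0.PosSemidef) (G : Fin k → Fin d → ℂ)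
    (hmin : ∀ G' : Fin k → Fin d → ℂ, (∀ i, normSqVec (G' i) = normSqVec (G i)) →
      potential f (S0 + frameOp G) ≤ potential f (S0 + frameOp G'))
    (l : Fin k) (Y Z : Fin d → ℂ) (hYZ : G l = Y + Z) (c c' : ℝ) (hc : c' < c)
    (hY : (S0 + frameOp G) *ᵥ Y = (c : ℂ) • Y) (hZ : (S0 + frameOp G) *ᵥ Z = (c' : ℂ) • Z)
    (hNy : 0 < normSqVec Y) (hNz : 0 < normSqVec Z) : False := by
  set S := S0 + frameOp G with hS
  have hSp : S.PosSemidef := hS0.add (frameOp_psd G)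
  have h1 : star Y ⬝ᵥ Z = 0 := eig_orth hSp.1 hY hZ hc.ne'
  have h2 : star Z ⬝ᵥ Y = 0 := eig_orth hSp.1 hZ hY hc.ne
  set Ny := normSqVec Y with hNy'
  set Nz := normSqVec Z with hNz'
  set M := 1 / Nz + 1 / Ny + 1 / (Ny * Nz) with hM
  have hMp : 0 < M := by positivity
  obtain ⟨δ, hδ, hδ1, hδN, hδK⟩ := exists_small Ny (M ^ 2 * (Ny * Nz) + 1) (c - c') hNy (by positivity)
    (by linarith)
  have hp0 : 0 ≤ 1 - δ / Ny := by rw [sub_nonneg, div_le_one hNy]; exact hδN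
  have hq0 : 0 ≤ 1 + δ / Nz := by positivity
  set p := Real.sqrt (1 - δ / Ny) with hp
  set q := Real.sqrt (1 + δ / Nz) with hq
  have hp2 : p ^ 2 = 1 - δ / Ny := Real.sq_sqrt hp0
  have hq2 : q ^ 2 = 1 + δ / Nz := Real.sq_sqrt hq0
  have hpq : 0 ≤ p * q := mul_nonneg (Real.sqrt_nonneg _) (Real.sqrt_nonneg _)
  set e := δ / Nz - δ / Ny - δ ^ 2 / (Ny * Nz) with he
  have hpq2 : (p * q) ^ 2 = 1 + e := by rw [mul_pow, hp2, hq2, he]; field_simp; ring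
  have hb2 : (p * q - 1) ^ 2 ≤ e ^ 2 := by
    have : e = (p * q - 1) * (p * q + 1) := by nlinarith
    rw [this, mul_pow]
    have : 1 ≤ (p * q + 1) ^ 2 := by nlinarith
    nlinarith [sq_nonneg (p * q - 1)]
  have heM : e ^ 2 ≤ (δ * M) ^ 2 := by
    apply sq_le_sq'
    · have a1 : δ ^ 2 / (Ny * Nz) ≤ δ * (1 / (Ny * Nz)) := by
        rw [div_eq_mul_one_div]; gcongr; nlinarith
      have a2 : 0 < δ / Nz := by positivity
      have a3 : δ * M = δ / Nz + δ / Ny + δ * (1 / (Ny * Nz)) := by rw [hM]; ring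
      linarith
    · have a1 : 0 ≤ δ ^ 2 / (Ny * Nz) := by positivity
      have a2 : 0 < δ / Ny := by positivity
      have a4 : 0 < δ * (1 / (Ny * Nz)) := by positivity
      have a3 : δ * M = δ / Nz + δ / Ny + δ * (1 / (Ny * Nz)) := by rw [hM]; ring
      linarith
  have key := potential_two f hf S hSp Y Z c c' hY hZ hc (δ / Ny) (δ / Nz) (p * q - 1) δ hδ
    (by field_simp; rfl) (by field_simp; rfl) hNy hNz (by
      have : (p * q - 1) ^ 2 * (Ny * Nz) ≤ (δ * M) ^ 2 * (Ny * Nz) := 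
        mul_le_mul_of_nonneg_right (hb2.trans heM) (by positivity)
      have : δ * (δ * (M ^ 2 * (Ny * Nz) + 1)) < δ * (c - c') := by gcongr
      rw [← hNy', ← hNz']
      nlinarith)
  have := hmin (Function.update G l ((p : ℂ) • Y + (q : ℂ) • Z)) (by
    intro i
    by_cases hi : i = l
    · subst hi
      rw [Function.update_self, hYZ, normSqVec_comb Y Z h1 h2]
      have := normSqVec_comb Y Z h1 h2 1 1
      simp only [Complex.ofReal_one, one_smul] at this
      rw [this, hp2, hq2, ← hNy', ← hNz']
      field_simp; ring
    · rw [Function.update_of_ne hi])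
  rw [frameOp_update, hYZ, vmv_comb] at this
  have e1 := vmv_comb Y Z 1 1
  simp only [Complex.ofReal_one, one_smul] at e1
  rw [e1] at this
  refine absurd this (not_le.mpr (lt_of_eq_of_lt ?_ key))
  congr 1
  rw [hp2, hq2, hS]
  push_cast
  module

open Matrix in
lemma claimB {d k : ℕ} (f : ℝ → ℝ) (hf : StrictConvexOn ℝ (Set.Ici 0) f)
    (S0 : Matrix (Fin d) (Fin d) ℂ) (hS0 : S0.PosSemidef) (G : Fin k → Fin d → ℂ)
    (hmin : ∀ G' : Fin k → Fin d → ℂ, (∀ i, normSqVec (G' i) = normSqVec (G i)) →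
      potential f (S0 + frameOp G) ≤ potential f (S0 + frameOp G'))
    (l l' : Fin k) (c c' : ℝ) (hc : c' < c)
    (hY : (S0 + frameOp G) *ᵥ G l = (c : ℂ) • G l)
    (hZ : (S0 + frameOp G) *ᵥ G l' = (c' : ℂ) • G l')
    (hNy : 0 < normSqVec (G l)) : normSqVec (G l') < normSqVec (G l) := by
  by_contra hle
  push Not at hle
  set S := S0 + frameOp G with hS
  have hSp : S.PosSemidef := hS0.add (frameOp_psd G)
  have h1 : star (G l) ⬝ᵥ (G l') = 0 := eig_orth hSp.1 hY hZ hc.ne'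
  have h2 : star (G l') ⬝ᵥ (G l) = 0 := eig_orth hSp.1 hZ hY hc.ne
  set a := normSqVec (G l) with ha
  set a' := normSqVec (G l') with ha'
  have hNz : 0 < a' := by linarith
  have hne : l ≠ l' := by
    rintro rfl
    rw [hY] at hZ
    have : ((c : ℂ) - c') • G l = 0 := by rw [sub_smul, hZ, sub_self]
    rcases smul_eq_zero.mp this with h | h
    · have : (c : ℂ) = c' := sub_eq_zero.mp h
      have : c = c' := by exact_mod_cast this
      linarith
    · rw [ha, h] at hNy; simp [normSqVec] at hNy
  obtain ⟨ε, hε, _, hεa, hεc⟩ := exists_small a 1 (c - c') hNy one_pos (by linarith)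
  set D := a' - a + 2 * ε with hD
  have hDp : 0 < D := by linarith
  have s1 : 0 ≤ a - ε := by linarith
  have s2 : 0 ≤ a' - a + ε := by linarith
  have q0 : ∀ t : ℝ, 0 ≤ t → Real.sqrt t ^ 2 = t := fun t ht => Real.sq_sqrt ht
  have np : 0 ≤ (a - ε) * (a' - a + ε) / D / a := by positivity
  have np' : 0 ≤ (a - ε) * ε / D / a := by positivity
  have nq : 0 ≤ ε * (a' + ε) / D / a' := by positivity
  have nq' : 0 ≤ (a' + ε) * (a' - a + ε) / D / a' := by positivity
  have hp2 := q0 _ np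
  have hp2' := q0 _ np'
  have hq2 := q0 _ nq
  have hq2' := q0 _ nq'
  have hcross : Real.sqrt ((a - ε) * (a' - a + ε) / D / a) * Real.sqrt (ε * (a' + ε) / D / a') =
    Real.sqrt ((a - ε) * ε / D / a) * Real.sqrt ((a' + ε) * (a' - a + ε) / D / a') := by
    rw [← Real.sqrt_mul np, ← Real.sqrt_mul np']
    congr 1
    ring
  set p := Real.sqrt ((a - ε) * (a' - a + ε) / D / a)
  set q := Real.sqrt (ε * (a' + ε) / D / a')
  set p' := Real.sqrt ((a - ε) * ε / D / a)
  set q' := Real.sqrt ((a' + ε) * (a' - a + ε) / D / a')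
  have key := potential_two f hf S hSp (G l) (G l') c c' hY hZ hc (ε / a) (ε / a') 0 ε hε
    (by field_simp; rfl) (by field_simp; rfl) hNy hNz (by nlinarith)
  have := hmin (Function.update (Function.update G l ((p : ℂ) • G l + (q : ℂ) • G l')) l'
      ((p' : ℂ) • G l + ((-q' : ℝ) : ℂ) • G l')) (by
    intro i
    by_cases hi : i = l'
    · subst hi
      rw [Function.update_self, normSqVec_comb _ _ h1 h2, neg_sq, hp2', hq2', ← ha, ← ha']
      have : D ≠ 0 := hDp.ne'
      field_simp
      rw [hD]; ring
    · rw [Function.update_of_ne hi]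
      by_cases hi : i = l
      · subst hi
        rw [Function.update_self, normSqVec_comb _ _ h1 h2, hp2, hq2, ← ha, ← ha']
        have : D ≠ 0 := hDp.ne'
        field_simp
        rw [hD]; ring
      · rw [Function.update_of_ne hi])
  rw [frameOp_update, frameOp_update, Function.update_of_ne hne.symm, vmv_comb, vmv_comb] at this
  refine absurd this (not_le.mpr (lt_of_eq_of_lt ?_ key))
  congr 1
  have e1 : (p : ℂ) ^ 2 + (p' : ℂ) ^ 2 = 1 - ε / a := by
    have : p ^ 2 + p' ^ 2 = 1 - ε / a := by
      rw [hp2, hp2']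
      have : D ≠ 0 := hDp.ne'
      field_simp
      rw [hD]; ring
    exact_mod_cast congrArg (fun t : ℝ => (t : ℂ)) this
  have e2 : (q : ℂ) ^ 2 + (q' : ℂ) ^ 2 = 1 + ε / a' := by
    have : q ^ 2 + q' ^ 2 = 1 + ε / a' := by
      rw [hq2, hq2']
      have : D ≠ 0 := hDp.ne'
      field_simp
      rw [hD]; ring
    exact_mod_cast congrArg (fun t : ℝ => (t : ℂ)) this
  have e3 : (p : ℂ) * q = p' * q' := by
    exact_mod_cast congrArg (fun t : ℝ => (t : ℂ)) hcross
  rw [hS]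
  push_cast
  rw [e3, (eq_sub_of_add_eq e1), (eq_sub_of_add_eq e2)]
  module


open Matrix in
lemma rdiag_mulVec_eig {d : ℕ} (ν : Fin d → ℝ) (y : Fin d → ℂ) (c : ℝ)
    (h : ∀ m, y m ≠ 0 → ν m = c) : rdiag ν *ᵥ y = (c : ℂ) • y := by
  ext m
  rw [rdiag, mulVec_diagonal, Pi.smul_apply, smul_eq_mul]
  by_cases hm : y m = 0
  · simp [hm]
  · rw [h m hm]

lemma frameOp_apply {d k : ℕ} (G : Fin k → Fin d → ℂ) (m n : Fin d) :
    frameOp G m n = ∑ l, G l m * star (G l n) := by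
  simp [frameOp, Matrix.sum_apply, Matrix.vecMulVec_apply]

open Matrix in
lemma rot_lemma {d k : ℕ} (G : Fin k → Fin d → ℂ) (μ : Fin d → ℝ) (hG : frameOp G = rdiag μ)
    (i i' : Fin d) (hii : i ≠ i') (hcond : ∀ l, G l i * G l i' = 0) (Cx x Cy y : ℝ)
    (hx : Cx ^ 2 + x ^ 2 = 1) (hy : Cy ^ 2 + y ^ 2 = 1) :
    ∃ G' : Fin k → Fin d → ℂ, (∀ l, normSqVec (G' l) = normSqVec (G l)) ∧
      (∀ l m, m ≠ i → m ≠ i' → G' l m = G l m) ∧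
      (∀ l, G' l i = Cx * G l i - y * G l i') ∧
      (∀ l, G' l i' = x * G l i + Cy * G l i') ∧
      frameOp G' = rdiag μ
        - ((μ i - Cx ^ 2 * μ i - y ^ 2 * μ i' : ℝ) : ℂ) • vecMulVec (Pi.single i 1) (star (Pi.single i 1))
        + ((x ^ 2 * μ i + Cy ^ 2 * μ i' - μ i' : ℝ) : ℂ) • vecMulVec (Pi.single i' 1) (star (Pi.single i' 1))
        + ((Cx * x * μ i - y * Cy * μ i' : ℝ) : ℂ) • 
          (vecMulVec (Pi.single i 1) (star (Pi.single i' 1)) + vecMulVec (Pi.single i' 1) (star (Pi.single i 1))) := by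
  set π : Fin d → Fin d := fun m => if m = i' then i else m with hπ
  set α : Fin d → ℝ := fun m => if m = i then Cx else if m = i' then x else 1 with hα
  set β : Fin d → ℝ := fun m => if m = i then -y else if m = i' then Cy else 0 with hβ
  set G' : Fin k → Fin d → ℂ := fun l m => α m * G l (π m) + β m * G l i' with hG'
  have hB : ∀ p q, ∑ l, G l p * star (G l q) = rdiag μ p q := by
    intro p q; rw [← hG, frameOp_apply]
  have g1 : ∀ l m, m ≠ i → m ≠ i' → G' l m = G l m := by
    intro l m h1 h2; simp [hG', hα, hβ, hπ, h1, h2]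
  have g2 : ∀ l, G' l i = Cx * G l i - y * G l i' := by
    intro l; simp [hG', hα, hβ, hπ, hii]; ring
  have g3 : ∀ l, G' l i' = x * G l i + Cy * G l i' := by
    intro l; simp [hG', hα, hβ, hπ, hii.symm]
  refine ⟨G', ?_, g1, g2, g3, ?_⟩
  · intro l
    unfold normSqVec
    have hmem : i' ∈ univ.erase i := by simp [hii.symm]
    rw [← Finset.add_sum_erase _ _ (mem_univ i), ← Finset.add_sum_erase _ _ hmem,
      ← Finset.add_sum_erase univ (fun m => Complex.normSq (G l m)) (mem_univ i), ← Finset.add_sum_erase _ (fun m => Complex.normSq (G l m)) hmem]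
    rw [Finset.sum_congr rfl (g := fun m => Complex.normSq (G l m))]
    · rw [g2, g3, ← add_assoc, ← add_assoc]
      congr 1
      rcases mul_eq_zero.mp (hcond l) with h | h
      · rw [h]; simp; linear_combination (Complex.normSq (G l i')) * hy
      · rw [h]; simp; linear_combination (Complex.normSq (G l i)) * hx
    · intro m hm
      simp only [mem_erase, mem_univ, and_true] at hm
      rw [g1 l m hm.2 hm.1]
  · have hexp : ∀ m n, frameOp G' m n = α m * α n * rdiag μ (π m) (π n) + α m * β n * rdiag μ (π m) i'
        + β m * α n * rdiag μ i' (π n) + β m * β n * rdiag μ i' i' := by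
      intro m n
      rw [frameOp_apply, ← hB, ← hB, ← hB, ← hB, Finset.mul_sum, Finset.mul_sum, Finset.mul_sum, Finset.mul_sum,
        ← Finset.sum_add_distrib, ← Finset.sum_add_distrib, ← Finset.sum_add_distrib]
      refine Finset.sum_congr rfl fun l _ => ?_
      simp only [hG', star_add, star_mul', Complex.star_def, Complex.conj_ofReal]
      ring
    ext m n
    rw [hexp]
    simp only [Matrix.add_apply, Matrix.sub_apply, Matrix.smul_apply, vecMulVec_apply, Pi.star_apply, smul_eq_mul]
    by_cases m1 : m = i
    · by_cases n1 : n = i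
      · subst m1; subst n1
        simp [hα, hβ, hπ, hii, hii.symm, rdiag]; ring
      · by_cases n2 : n = i'
        · subst m1; subst n2
          simp [hα, hβ, hπ, hii, hii.symm, rdiag]; ring
        · subst m1
          simp [hα, hβ, hπ, hii, hii.symm, rdiag, n1, n2, Ne.symm n1, Ne.symm n2]
    · by_cases m2 : m = i'
      · by_cases n1 : n = i
        · subst m2; subst n1
          simp [hα, hβ, hπ, hii, hii.symm, rdiag]; ring
        · by_cases n2 : n = i'
          · subst m2; subst n2
            simp [hα, hβ, hπ, hii, hii.symm, rdiag]; ring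
          · subst m2
            simp [hα, hβ, hπ, hii, hii.symm, rdiag, n1, n2, Ne.symm n1, Ne.symm n2]
      · by_cases n1 : n = i
        · subst n1
          simp [hα, hβ, hπ, hii, hii.symm, rdiag, m1, m2]
        · by_cases n2 : n = i'
          · subst n2
            simp [hα, hβ, hπ, hii, hii.symm, rdiag, m1, m2]
          · simp [hα, hβ, hπ, rdiag, m1, m2, n1, n2]

lemma normSqVec_single {d : ℕ} (i : Fin d) (z : ℂ) :
    normSqVec (Pi.single i z : Fin d → ℂ) = Complex.normSq z := by
  rw [normSqVec, Finset.sum_eq_single i]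
  · simp
  · intro n _ hn; rw [Pi.single_eq_of_ne hn]; simp
  · simp

lemma normSqVec_pos {d : ℕ} (y : Fin d → ℂ) (i : Fin d) (h : y i ≠ 0) : 0 < normSqVec y :=
  Finset.sum_pos' (fun _ _ => Complex.normSq_nonneg _) ⟨i, mem_univ _, Complex.normSq_pos.mpr h⟩

set_option maxHeartbeats 1000000 in
open Matrix in
lemma claimC {d k : ℕ} (f : ℝ → ℝ) (hf : StrictConvexOn ℝ (Set.Ici 0) f)
    (S0 : Matrix (Fin d) (Fin d) ℂ) (hS0 : S0.PosSemidef) (G : Fin k → Fin d → ℂ)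
    (hmin : ∀ G' : Fin k → Fin d → ℂ, (∀ i, normSqVec (G' i) = normSqVec (G i)) →
      potential f (S0 + frameOp G) ≤ potential f (S0 + frameOp G'))
    (μ ν : Fin d → ℝ) (hμ : frameOp G = rdiag μ) (hν : S0 + frameOp G = rdiag ν)
    (hE : ∀ l m m', G l m ≠ 0 → G l m' ≠ 0 → ν m = ν m')
    (i i' : Fin d) (hc : ν i' < ν i) (hμi : 0 < μ i) (hle : μ i ≤ μ i') : False := by
  have hSp : (S0 + frameOp G).PosSemidef := hS0.add (frameOp_psd G)
  have hνp : (rdiag ν).PosSemidef := by rw [← hν]; exact hSp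
  have hii : i ≠ i' := by rintro rfl; exact lt_irrefl _ hc
  have hcond : ∀ l, G l i * G l i' = 0 := by
    intro l
    by_contra h
    have := hE l i i' (left_ne_zero_of_mul h) (right_ne_zero_of_mul h)
    linarith
  have hsing : ∀ (j : Fin d) (z : ℂ), rdiag ν *ᵥ (Pi.single j z) = ((ν j : ℝ) : ℂ) • (Pi.single j z) := by
    intro j z
    apply rdiag_mulVec_eig
    intro m hm
    by_cases h : m = j
    · rw [h]
    · exact absurd (Pi.single_eq_of_ne h _) hm
  have hμ'pos : 0 < μ i' := by linarith
  rcases hle.lt_or_eq with hlt | heq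
  · -- non tie
    set ρ := μ i / μ i' with hρ
    have hρ0 : 0 < ρ := by positivity
    have hρ1 : ρ < 1 := by rw [hρ, div_lt_one hμ'pos]; exact hlt
    set κ := μ i * (1 - ρ) with hκ
    have hκp : 0 < κ := mul_pos hμi (by linarith)
    obtain ⟨t, ht, ht1, _, htK⟩ := exists_small 1 (μ i ^ 2 + κ ^ 2) (κ * (ν i - ν i')) one_pos
      (by positivity) (mul_pos hκp (by linarith))
    set x := Real.sqrt t
    have hx2 : x ^ 2 = t := Real.sq_sqrt ht.le
    have hx0 : 0 ≤ x := Real.sqrt_nonneg _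
    set y := x * ρ with hy
    have hy2 : y ^ 2 = t * ρ ^ 2 := by rw [hy, mul_pow, hx2]
    have hρ2 : ρ ^ 2 ≤ 1 := by nlinarith
    have hy1 : y ^ 2 ≤ t := by rw [hy2]; nlinarith
    set Cx := Real.sqrt (1 - t)
    set Cy := Real.sqrt (1 - y ^ 2)
    have hCx2 : Cx ^ 2 = 1 - t := Real.sq_sqrt (by linarith)
    have hCy2 : Cy ^ 2 = 1 - y ^ 2 := Real.sq_sqrt (by linarith)
    have hCx0 : 0 ≤ Cx := Real.sqrt_nonneg _
    have hCy0 : 0 ≤ Cy := Real.sqrt_nonneg _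
    have hCx1 : Cx ≤ 1 := by nlinarith
    have hCy1 : Cy ≤ 1 := by nlinarith [sq_nonneg y]
    have hCxt : 1 - Cx ≤ t := by nlinarith
    have hCyt : 1 - Cy ≤ t := by nlinarith
    have hdiff : (Cx - Cy) ^ 2 ≤ t ^ 2 := sq_le_sq' (by linarith) (by linarith)
    obtain ⟨G', hn, -, -, -, hF⟩ := rot_lemma G μ hμ i i' hii hcond Cx x Cy y
      (by rw [hCx2, hx2]; ring) (by rw [hCy2]; ring)
    have hmu' : μ i = ρ * μ i' := by rw [hρ]; field_simp
    have e1 : μ i - Cx ^ 2 * μ i - y ^ 2 * μ i' = t * κ := by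
      rw [hCx2, hy2, hκ, hmu']; ring
    have e2 : x ^ 2 * μ i + Cy ^ 2 * μ i' - μ i' = t * κ := by
      rw [hCy2, hy2, hκ, hmu', hx2]; ring
    have e3 : Cx * x * μ i - y * Cy * μ i' = x * μ i * (Cx - Cy) := by
      rw [hmu', hy]; ring
    rw [e1, e2, e3] at hF
    have htκ : 0 < t * κ := mul_pos ht hκp
    have key := potential_two f hf (rdiag ν) hνp (Pi.single i 1) (Pi.single i' 1) _ _ (hsing i 1)
      (hsing i' 1) hc (t * κ) (t * κ) (x * μ i * (Cx - Cy)) (t * κ) htκ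
      (by simp [normSqVec_single]) (by simp [normSqVec_single])
      (by simp [normSqVec_single]) (by simp [normSqVec_single]) (by
        simp only [normSqVec_single, map_one, mul_one]
        have q1 : (x * μ i * (Cx - Cy)) ^ 2 ≤ t * (t * μ i ^ 2) := by
          rw [mul_pow, mul_pow, hx2]
          have : t * μ i ^ 2 * (Cx - Cy) ^ 2 ≤ t * μ i ^ 2 * t ^ 2 := by gcongr
          have : t * μ i ^ 2 * t ^ 2 ≤ t * μ i ^ 2 * t := by
            have : t ^ 2 ≤ t := by nlinarith
            gcongr
          linarith
        have q2 : t * (t * (μ i ^ 2 + κ ^ 2)) < t * (κ * (ν i - ν i')) := by gcongr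
        nlinarith)
    have := hmin G' hn
    refine absurd this (not_le.mpr ?_)
    rw [hν]
    refine lt_of_eq_of_lt ?_ key
    congr 1
    rw [hF, ← hν, hμ]
    abel
  · -- tie
    obtain ⟨G', hn, h1, h2, h3, hF⟩ := rot_lemma G μ hμ i i' hii hcond (4/5) (3/5) (4/5) (3/5)
      (by norm_num) (by norm_num)
    have hF' : frameOp G' = frameOp G := by
      rw [hF, hμ, ← heq]
      have z1 : μ i - (4/5) ^ 2 * μ i - (3/5) ^ 2 * μ i = 0 := by ring
      have z2 : (3/5) ^ 2 * μ i + (4/5) ^ 2 * μ i - μ i = 0 := by ring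
      have z3 : (4/5) * (3/5) * μ i - (3/5) * (4/5) * μ i = 0 := by ring
      rw [z1, z2, z3]
      simp
    have hex : ∃ l, G l i ≠ 0 := by
      by_contra hcon
      push Not at hcon
      have := congrFun (congrFun hμ i) i
      rw [frameOp_apply] at this
      simp [hcon, rdiag] at this
      have h0 : (0 : ℝ) = μ i := by exact_mod_cast this
      linarith
    obtain ⟨l, hl⟩ := hex
    have hl' : G l i' = 0 := (mul_eq_zero.mp (hcond l)).resolve_left hl
    have hi' : G' l i' = (3/5 : ℂ) * G l i := by rw [h3, hl']; simp
    have hi : G' l i = (4/5 : ℂ) * G l i := by rw [h2, hl']; simp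
    refine lemD f hf S0 hS0 G' ?_ l (Function.update (G' l) i' 0) (Pi.single i' (G' l i')) ?_ (ν i) (ν i') hc ?_ ?_ ?_ ?_
    · intro G'' hG''
      rw [hF']
      exact hmin G'' fun j => (hG'' j).trans (hn j)
    · ext m
      by_cases h : m = i'
      · subst h; simp
      · simp [h]
    · rw [hF', hν]
      apply rdiag_mulVec_eig
      intro m hm
      by_cases hmi' : m = i'
      · subst hmi'; simp at hm
      by_cases hmi : m = i
      · rw [hmi]
      rw [Function.update_of_ne hmi', h1 l m hmi hmi'] at hm
      exact hE l m i hm hl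
    · rw [hF', hν]; exact hsing _ _
    · apply normSqVec_pos _ i
      rw [Function.update_of_ne hii, hi]
      simp [hl]
    · apply normSqVec_pos _ i'
      rw [Pi.single_eq_same, hi']
      simp [hl]


open Matrix in
lemma claimA {d k : ℕ} (f : ℝ → ℝ) (hf : StrictConvexOn ℝ (Set.Ici 0) f)
    (S0 : Matrix (Fin d) (Fin d) ℂ) (hS0 : S0.PosSemidef) (G : Fin k → Fin d → ℂ)
    (hmin : ∀ G' : Fin k → Fin d → ℂ, (∀ i, normSqVec (G' i) = normSqVec (G i)) →
      potential f (S0 + frameOp G) ≤ potential f (S0 + frameOp G'))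
    (hpos : ∀ l, 0 < normSqVec (G l)) (c c' : ℝ) (hc : c' < c) (w : Fin d → ℂ)
    (hw : (S0 + frameOp G) *ᵥ w = (c' : ℂ) • w) (hwn : normSqVec w = 1) (z : Fin k → ℂ)
    (hz : ∀ l, z l ≠ 0 → (S0 + frameOp G) *ᵥ G l = (c : ℂ) • G l)
    (hsum : ∑ l, z l • G l = 0) : z = 0 := by
  by_contra hz0
  obtain ⟨l0, hl0⟩ : ∃ l, z l ≠ 0 := Function.ne_iff.mp hz0
  set S := S0 + frameOp G with hS
  have hSp : S.PosSemidef := hS0.add (frameOp_psd G)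
  set a : Fin k → ℝ := fun l => normSqVec (G l) with ha
  have hal : ∀ l, normSqVec (G l) = a l := fun _ => rfl
  have hapos : ∀ l, 0 < a l := hpos
  have hMn : ∀ l, 0 ≤ Complex.normSq (z l) / a l := fun l => 
    div_nonneg (Complex.normSq_nonneg _) (hapos l).le
  set M := ∑ l, Complex.normSq (z l) / a l with hM
  have hMp : 0 < M := Finset.sum_pos' (fun l _ => hMn l)
    ⟨l0, mem_univ _, div_pos (Complex.normSq_pos.mpr hl0) (hapos l0)⟩
  set K := ∑ l, 2 * Complex.normSq (z l) with hK
  have hKp : 0 < K := Finset.sum_pos' (fun l _ => by have := Complex.normSq_nonneg (z l); positivity)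
    ⟨l0, mem_univ _, by have := Complex.normSq_pos.mpr hl0; positivity⟩
  obtain ⟨T, hT, -, hTM, hTK⟩ := exists_small (1 / (4 * M)) K (c - c') (by positivity) hKp
    (by linarith)
  set q : Fin k → ℝ := fun l => T * (Complex.normSq (z l) / a l) with hq
  have hq0 : ∀ l, 0 ≤ q l := fun l => mul_nonneg hT.le (hMn l)
  have hq4 : ∀ l, q l ≤ 1 / 4 := by
    intro l
    have h1 : Complex.normSq (z l) / a l ≤ M := Finset.single_le_sum (fun l _ => hMn l) (mem_univ l)
    calc q l ≤ T * M := mul_le_mul_of_nonneg_left h1 hT.le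
      _ ≤ 1 / (4 * M) * M := by gcongr
      _ = 1 / 4 := by field_simp
  set r : Fin k → ℝ := fun l => (1 - Real.sqrt (1 - 4 * q l)) / 2 with hr
  have hsq : ∀ l, Real.sqrt (1 - 4 * q l) ^ 2 = 1 - 4 * q l := fun l =>
    Real.sq_sqrt (by linarith [hq4 l])
  have hrq : ∀ l, (1 - r l) * r l = q l := by
    intro l; simp only [hr]; linear_combination (-1/4) * hsq l
  have hrh : ∀ l, r l ≤ 1 / 2 := by
    intro l; simp only [hr]; linarith [Real.sqrt_nonneg (1 - 4 * q l)]
  have hr0 : ∀ l, 0 ≤ r l := by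
    intro l
    by_contra h
    push Not at h
    nlinarith [hrq l, hq0 l]
  have hr2 : ∀ l, r l ≤ 2 * q l := by
    intro l; rw [← hrq l]; nlinarith [hrh l, hr0 l]
  have hqa : ∀ l, q l * a l = T * Complex.normSq (z l) := by
    intro l; have := (hapos l).ne'; simp only [hq]; field_simp
  have hrz : ∀ l, r l ≠ 0 → z l ≠ 0 := by
    intro l h h0
    apply h
    have : q l = 0 := by simp [hq, h0]
    have h2 := hr2 l
    linarith [hr0 l]
  have hzr : 0 < r l0 := by
    rcases (hr0 l0).lt_or_eq with h | h
    · exact h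
    · exfalso
      have := hrq l0
      rw [← h] at this
      have h3 := hqa l0
      rw [← this] at h3
      have := mul_pos hT (Complex.normSq_pos.mpr hl0)
      linarith
  set C : Fin k → ℝ := fun l => Real.sqrt (1 - r l) with hC
  have hC2 : ∀ l, C l ^ 2 = 1 - r l := fun l => Real.sq_sqrt (by linarith [hrh l])
  have hCp : ∀ l, 0 < C l := fun l => Real.sqrt_pos.mpr (by linarith [hrh l])
  set t := Real.sqrt T with ht
  have ht2 : t ^ 2 = T := Real.sq_sqrt hT.le
  set u : Fin k → ℂ := fun l => (t : ℂ) * star (z l) / C l with hu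
  have hun : ∀ l, Complex.normSq (u l) = r l * a l := by
    intro l
    simp only [hu, Complex.normSq_div, Complex.normSq_mul, Complex.normSq_ofReal, Complex.star_def,
      Complex.normSq_conj, ← pow_two, ht2, hC2]
    rw [div_eq_iff (by linarith [hrh l]), ← hqa, ← hrq]; ring
  have hcu : ∀ l, (C l : ℂ) * star (u l) = t * z l := by
    intro l
    have : (C l : ℂ) ≠ 0 := by exact_mod_cast (hCp l).ne'
    simp only [hu, Complex.star_def, map_div₀, map_mul, Complex.conj_ofReal, Complex.conj_conj]
    field_simp
  have hcu' : ∀ l, (C l : ℂ) * u l = t * star (z l) := by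
    intro l
    have : (C l : ℂ) ≠ 0 := by exact_mod_cast (hCp l).ne'
    simp only [hu]
    field_simp
  set τ := ∑ l, r l * a l with hτ
  have hτ0 : 0 < τ := Finset.sum_pos' (fun l _ => mul_nonneg (hr0 l) (hapos l).le)
    ⟨l0, mem_univ _, mul_pos hzr (hapos l0)⟩
  have hτc : τ < c - c' := by
    refine lt_of_le_of_lt ?_ hTK
    rw [hτ, hK, Finset.mul_sum]
    refine Finset.sum_le_sum fun l _ => ?_
    have := mul_le_mul_of_nonneg_right (hr2 l) (hapos l).le
    have := hqa l
    linarith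
  have key := potential_multi f hf S hSp G r w c c' τ hr0 (fun l hl => hz l (hrz l hl)) hw hwn hτ hτ0 hτc
  have horth : ∀ l, z l ≠ 0 → star (G l) ⬝ᵥ w = 0 ∧ star w ⬝ᵥ G l = 0 := fun l hl =>
    ⟨eig_orth hSp.1 (hz l hl) hw hc.ne', eig_orth hSp.1 hw (hz l hl) hc.ne⟩
  have := hmin (fun l => (C l : ℂ) • G l + u l • w) (by
    intro l
    by_cases hl : z l = 0
    · have hu0 : u l = 0 := by simp [hu, hl]
      have hr0 : r l = 0 := by by_contra h; exact hrz l h hl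
      have : C l = 1 := by simp [hC, hr0]
      simp [hu0, this]
    · obtain ⟨o1, o2⟩ := horth l hl
      have e := normSqVec_dot ((C l : ℂ) • G l + u l • w)
      simp only [star_add, star_smul, add_dotProduct, dotProduct_add, smul_dotProduct, dotProduct_smul,
        o1, o2, normSqVec_dot, Complex.star_def, Complex.conj_ofReal, smul_eq_mul, hwn, hal] at e
      have h2 : ((C l ^ 2 * a l + Complex.normSq (u l) : ℝ) : ℂ) = 
          (normSqVec ((C l : ℂ) • G l + u l • w) : ℝ) := by
        rw [← e]; push_cast; rw [Complex.normSq_eq_conj_mul_self]; push_cast; ring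
      have h3 : C l ^ 2 * a l + Complex.normSq (u l) = normSqVec ((C l : ℂ) • G l + u l • w) := by
        exact_mod_cast h2
      rw [← h3, hun, hC2, hal]; ring)
  refine absurd this (not_le.mpr (lt_of_eq_of_lt ?_ key))
  congr 1
  rw [hS, add_sub_assoc, add_assoc]
  congr 1
  have hterm : ∀ l, vecMulVec ((C l : ℂ) • G l + u l • w) (star ((C l : ℂ) • G l + u l • w)) =
      vecMulVec (G l) (star (G l)) - (r l : ℂ) • vecMulVec (G l) (star (G l))
       + (t : ℂ) • vecMulVec (z l • G l) (star w) + (t : ℂ) • vecMulVec w (star (z l • G l))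
       + ((r l * a l : ℝ) : ℂ) • vecMulVec w (star w) := by
    intro l
    have hC2' : (C l : ℂ) * C l = 1 - r l := by rw [← pow_two]; exact_mod_cast congrArg (fun t : ℝ => (t : ℂ)) (hC2 l)
    have hun' : u l * star (u l) = ((r l * a l : ℝ) : ℂ) := by
      rw [← hun, Complex.star_def, Complex.mul_conj]
    ext m n
    simp only [vecMulVec_apply, Matrix.add_apply, Matrix.sub_apply, Matrix.smul_apply, Pi.add_apply,
      Pi.smul_apply, Pi.star_apply, smul_eq_mul, star_add, star_mul', Complex.star_def, Complex.conj_ofReal] at hun' hcu hcu' ⊢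
    linear_combination (G l m * (starRingEnd ℂ) (G l n)) * hC2' + (w m * (starRingEnd ℂ) (w n)) * hun' + 
      (G l m * (starRingEnd ℂ) (w n)) * hcu l + (w m * (starRingEnd ℂ) (G l n)) * hcu' l
  have hv1 : ∑ l, vecMulVec (z l • G l) (star w) = 0 := by
    have e : ∑ l, vecMulVec (z l • G l) (star w) = vecMulVec (∑ l, z l • G l) (star w) := by
      ext m n; simp [Matrix.sum_apply, vecMulVec_apply, Finset.sum_mul]
      refine Finset.sum_congr rfl fun l _ => ?_
      ring
    rw [e, hsum]; simp
  have hv2 : ∑ l, vecMulVec w (star (z l • G l)) = 0 := by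
    have e : ∑ l, vecMulVec w (star (z l • G l)) = vecMulVec w (star (∑ l, z l • G l)) := by
      ext m n; simp [Matrix.sum_apply, vecMulVec_apply, Finset.mul_sum]
      refine Finset.sum_congr rfl fun l _ => ?_
      ring
    rw [e, hsum]; simp
  unfold frameOp
  simp only [hterm, Finset.sum_add_distrib, Finset.sum_sub_distrib, ← Finset.smul_sum, hv1, hv2,
    smul_zero, add_zero, ← Finset.sum_smul, ← Complex.ofReal_sum, ← hτ]


lemma card_le_of_indep {k d : ℕ} (P : Fin k → Prop) (Q : Fin d → Prop) [DecidablePred P]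
    [DecidablePred Q] (M : Fin k → Fin d → ℂ) (supp : ∀ l i, P l → M l i ≠ 0 → Q i)
    (indep : ∀ z : Fin k → ℂ, (∀ l, z l ≠ 0 → P l) → (∀ i, ∑ l, z l * M l i = 0) → z = 0) :
    #{l | P l} ≤ #{i | Q i} := by
  have hli : LinearIndependent ℂ (fun (l : {l // P l}) => fun (i : {i // Q i}) => M l.1 i.1) := by
    rw [Fintype.linearIndependent_iff]
    intro g hg
    have hz := indep (fun l => if h : P l then g ⟨l, h⟩ else 0) (by
      intro l hl
      by_contra h
      simp [h] at hl) (by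
      intro i
      by_cases hi : Q i
      · have := congrFun hg ⟨i, hi⟩
        simp only [Finset.sum_apply, Pi.smul_apply, smul_eq_mul, Pi.zero_apply] at this
        refine Eq.trans ?_ this
        rw [← Finset.sum_subset (Finset.subset_univ (univ.filter P))]
        · rw [Finset.sum_subtype (univ.filter P) (p := P) (by simp)]
          refine Finset.sum_congr rfl fun l _ => ?_
          simp [l.2]
        · intro l _ hl
          simp only [mem_filter, mem_univ, true_and] at hl
          simp [hl]
      · refine Finset.sum_eq_zero fun l _ => ?_
        by_cases hl : P l
        · by_cases hM : M l i = 0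
          · simp [hM]
          · exact absurd (supp l i hl hM) hi
        · simp [hl])
    intro l
    have := congrFun hz l.1
    simpa [l.2] using this
  have := hli.fintype_card_le_finrank
  simpa [Fintype.card_subtype] using this

open Matrix in
theorem core {d k : ℕ} (f : ℝ → ℝ) (hf : StrictConvexOn ℝ (Set.Ici 0) f)
    (S0 : Matrix (Fin d) (Fin d) ℂ) (hS0 : S0.PosSemidef) (a : Fin k → ℝ)
    (ha_pos : ∀ i, 0 < a i) (ha_mono : Antitone a)
    (G : Fin k → Fin d → ℂ) (hG : ∀ i, normSqVec (G i) = a i)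
    (hmin : ∀ G' : Fin k → Fin d → ℂ, (∀ i, normSqVec (G' i) = normSqVec (G i)) →
      potential f (S0 + frameOp G) ≤ potential f (S0 + frameOp G'))
    (lam μ : Fin d → ℝ) (hlam : S0 = rdiag lam) (hμ : frameOp G = rdiag μ) (hμanti : Antitone μ)
    (sF : ℕ) (hsFd : sF ≤ d) (hsmu : ∀ i : Fin d, μ i ≠ 0 ↔ (i : ℕ) < sF)
    (p : ℕ) (hp : 0 < p) (c : Fin p → ℝ) (hcanti : StrictAnti c)
    (hKcover : ∀ i : Fin d, (i : ℕ) < sF → ∃ j : Fin p, lam i + μ i = c j)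
    (hKattain : ∀ j : Fin p, ∃ i : Fin d, (i : ℕ) < sF ∧ lam i + μ i = c j)
    (hJcover : ∀ l : Fin k, ∃ j : Fin p, ∀ m, G l m ≠ 0 → lam m + μ m = c j) :
    ∃ s : Fin (p + 1) → ℕ, s 0 = 0 ∧ StrictMono s ∧ s (Fin.last p) = sF ∧
      (∀ j : Fin p, ∀ i : Fin d, (i : ℕ) < sF →
        (lam i + μ i = c j ↔ s j.castSucc ≤ (i : ℕ) ∧ (i : ℕ) < s j.succ)) ∧
      (∀ j : Fin p, ∀ l : Fin k,
        ((∀ m, G l m ≠ 0 → lam m + μ m = c j) ↔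
          s j.castSucc ≤ (l : ℕ) ∧ ((j : ℕ) + 1 < p → (l : ℕ) < s j.succ))) ∧
      (∀ i : Fin d, sF ≤ (i : ℕ) → lam i + μ i = lam i) ∧
      (∀ j : Fin p, (j : ℕ) + 1 < p → c j = initAvg lam a (s j.castSucc) (s j.succ)) ∧
      c ⟨p - 1, by omega⟩ = finalAvg lam a (s ⟨p - 1, by omega⟩) sF := by
  have hcinj := hcanti.injective
  set ν : Fin d → ℝ := fun i => lam i + μ i with hν
  have hSν : S0 + frameOp G = rdiag ν := by
    rw [hlam, hμ, rdiag, rdiag, rdiag, diagonal_add]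
    congr 1; ext i; simp [hν]
  have hrow : ∀ i i', ∑ l, G l i * star (G l i') = if i = i' then (μ i : ℂ) else 0 := by
    intro i i'
    rw [← frameOp_apply, hμ, rdiag, diagonal_apply]
  have hμs : ∀ i, μ i = ∑ l, Complex.normSq (G l i) := by
    intro i
    have := hrow i i
    simp only [if_true, Complex.star_def, Complex.mul_conj] at this
    exact_mod_cast this.symm
  have hμ0 : ∀ i, 0 ≤ μ i := fun i => by
    rw [hμs]; exact Finset.sum_nonneg fun _ _ => Complex.normSq_nonneg _
  have hGs : ∀ l i, G l i ≠ 0 → (i : ℕ) < sF := by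
    intro l i h
    rw [← hsmu, hμs]
    have hpos : 0 < ∑ l, Complex.normSq (G l i) :=
      Finset.sum_pos' (fun _ _ => Complex.normSq_nonneg _)
        ⟨l, mem_univ _, Complex.normSq_pos.mpr h⟩
    exact hpos.ne'
  choose J hJ using hJcover
  choose K hK using hKcover
  have hGne : ∀ l, ∃ m, G l m ≠ 0 := by
    intro l
    by_contra h
    push Not at h
    have h1 := hG l
    have h2 := ha_pos l
    simp [normSqVec, h] at h1
    linarith
  set h : Fin d → ℕ := fun i => if hi : (i : ℕ) < sF then (K i hi : ℕ) else p with hh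
  have hhp : ∀ i, h i < p ↔ (i : ℕ) < sF := by
    intro i
    by_cases hi : (i : ℕ) < sF
    · simp [hh, hi]
    · simp [hh, hi]
  have hhj : ∀ (j : Fin p) (i : Fin d), h i = j ↔ (i : ℕ) < sF ∧ ν i = c j := by
    intro j i
    by_cases hi : (i : ℕ) < sF
    · simp only [hh, hi, dif_pos, true_and]
      rw [hν]; simp only
      rw [hK i hi]
      constructor
      · intro e; rw [Fin.ext e]
      · intro e; rw [hcinj e]
    · simp only [hh, hi, dif_neg, not_false_iff, false_and, iff_false]
      have := j.2; omega
  have hE : ∀ l m m', G l m ≠ 0 → G l m' ≠ 0 → ν m = ν m' := by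
    intro l m m' h1 h2
    exact (hJ l m h1).trans (hJ l m' h2).symm
  have heig : ∀ l, (S0 + frameOp G) *ᵥ G l = (c (J l) : ℂ) • G l := by
    intro l
    rw [hSν]
    exact rdiag_mulVec_eig _ _ _ (hJ l)
  have hpos : ∀ l, 0 < normSqVec (G l) := fun l => by rw [hG]; exact ha_pos l
  -- support
  have hsupp : ∀ l i, G l i ≠ 0 → h i = J l := by
    intro l i hi
    rw [hhj]
    exact ⟨hGs l i hi, hJ l i hi⟩
  -- monotonicity of the indices
  have hmono : Monotone h := by
    intro i i' hii
    by_contra hlt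
    push Not at hlt
    have hle : h i ≤ p := by
      by_cases hi : (i : ℕ) < sF
      · exact ((hhp i).mpr hi).le
      · simp [hh, hi]
    have hi' : (i' : ℕ) < sF := (hhp i').mp (by omega)
    have hi : (i : ℕ) < sF := lt_of_le_of_lt hii hi'
    have e1 := (hhj ⟨h i', (hhp i').mpr hi'⟩ i').mp rfl
    have e2 := (hhj ⟨h i, (hhp i).mpr hi⟩ i).mp rfl
    refine claimC f hf S0 hS0 G hmin μ ν hμ hSν hE i' i ?_ ?_ (hμanti hii)
    · rw [e1.2, e2.2]; exact hcanti hlt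
    · exact lt_of_le_of_ne (hμ0 i') ((hsmu i').mpr hi').symm
  have hJmono : Monotone (fun l => (J l : ℕ)) := by
    intro l l' hll
    by_contra hlt
    simp only [not_le] at hlt
    have := claimB f hf S0 hS0 G hmin l' l (c (J l')) (c (J l)) (hcanti hlt) (heig l') (heig l) (hpos l')
    rw [hG, hG] at this
    exact absurd (ha_mono hll) (not_le.mpr this)
  -- cardinalities
  have hcard : ∀ j : ℕ, j + 1 < p → #{l | (J l : ℕ) = j} = #{i | h i = j} := by
    intro j hj
    apply le_antisymm
    · apply card_le_of_indep _ _ G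
      · intro l i hl hi
        rw [hsupp l i hi, hl]
      · intro z hz hsum
        obtain ⟨i0, hi0, hi0'⟩ := hKattain ⟨p - 1, by omega⟩
        refine claimA f hf S0 hS0 G hmin hpos (c ⟨j, by omega⟩) (c ⟨p - 1, by omega⟩) ?_ 
          (Pi.single i0 1) ?_ ?_ z ?_ ?_
        · apply hcanti; simp [Fin.lt_def]; omega
        · rw [hSν]
          apply rdiag_mulVec_eig
          intro m hm
          by_cases hmi : m = i0
          · rw [hmi]; exact hi0'
          · exact absurd (Pi.single_eq_of_ne hmi _) hm
        · simp [normSqVec_single]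
        · intro l hl
          have : J l = ⟨j, by omega⟩ := Fin.ext (hz l hl)
          rw [← this]; exact heig l
        · ext i
          simpa [Finset.sum_apply] using hsum i
    · apply card_le_of_indep _ _ (fun i l => G l i)
      · intro i l hi hl
        rw [← hsupp l i hl, hi]
      · intro y hy hsum
        ext i0
        simp only [Pi.zero_apply]
        by_contra hne
        have hi0 : (i0 : ℕ) < sF := (hhp i0).mp (by rw [hy i0 hne]; omega)
        have hμne := (hsmu i0).mpr hi0
        have h1 : ∑ l, (∑ i, y i * G l i) * star (G l i0) = 0 :=
          Finset.sum_eq_zero fun l _ => by rw [hsum l, zero_mul]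
        simp only [Finset.sum_mul, mul_assoc] at h1
        rw [Finset.sum_comm] at h1
        simp only [← Finset.mul_sum, hrow] at h1
        simp [hne, hμne] at h1
  set s : ℕ → ℕ := fun j => #{i | h i < j} with hs
  set t : ℕ → ℕ := fun j => #{l | (J l : ℕ) < j} with ht
  have hs_iff : ∀ (j : ℕ) (i : Fin d), (i : ℕ) < s j ↔ h i < j := fun j i =>
    Fin.lt_card_filter_univ_iff_apply_of_imp (fun i => h i < j) (fun x y hxy hx => lt_of_le_of_lt (hmono hxy) hx)
  have ht_iff : ∀ (j : ℕ) (l : Fin k), (l : ℕ) < t j ↔ (J l : ℕ) < j := fun j l =>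
    Fin.lt_card_filter_univ_iff_apply_of_imp (fun l => (J l : ℕ) < j) (fun x y hxy hx => lt_of_le_of_lt (hJmono hxy) hx)
  have hstep : ∀ (n : ℕ) (g : Fin n → ℕ) (j : ℕ), #{i | g i < j + 1} = #{i | g i < j} + #{i | g i = j} := by
    intro n g j
    rw [← Finset.card_union_of_disjoint]
    · congr 1
      ext i; simp; omega
    · rw [Finset.disjoint_filter]; intro x _ hx; omega
  have hst : ∀ j, j < p → t j = s j := by
    intro j
    induction j with
    | zero => intro _; simp [hs, ht]
    | succ j ih =>
      intro hj
      simp only [ht, hs] at ih ⊢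
      rw [hstep _ (fun l => (J l : ℕ)), hstep, ih (by omega), hcard j hj]
  have hKsucc : ∀ j : ℕ, s (j + 1) = s j + #{i | h i = j} := fun j => hstep _ h j
  have hsp : s p = sF := by
    have h1 : s p ≤ d := by simp only [hs]; exact (Finset.card_le_univ _).trans (by simp)
    rcases lt_trichotomy (s p) sF with hlt | heq | hgt
    · have := (hs_iff p ⟨s p, by omega⟩).mpr ((hhp _).mpr hlt)
      simp at this
    · exact heq
    · have := (hhp _).mp ((hs_iff p ⟨sF, by omega⟩).mp hgt)
      simp at this
  have hJiff : ∀ (j : Fin p) (l : Fin k), (∀ m, G l m ≠ 0 → ν m = c j) ↔ (J l : ℕ) = j := by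
    intro j l
    constructor
    · intro hall
      obtain ⟨m, hm⟩ := hGne l
      have := hsupp l m hm
      rw [← this, hhj]
      exact ⟨hGs l m hm, hall m hm⟩
    · intro e m hm
      rw [← Fin.ext e]; exact hJ l m hm
  have hKwin : ∀ (j : ℕ) (i : Fin d), h i = j ↔ s j ≤ (i : ℕ) ∧ (i : ℕ) < s (j + 1) := by
    intro j i
    rw [hs_iff, ← not_lt, hs_iff]; omega
  have hJwin : ∀ (j : ℕ), j + 1 < p → ∀ (l : Fin k), (J l : ℕ) = j ↔ s j ≤ (l : ℕ) ∧ (l : ℕ) < s (j + 1) := by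
    intro j hj l
    rw [← hst j (by omega), ← hst (j + 1) hj, ht_iff, ← not_lt, ht_iff]; omega
  have hJlast : ∀ (j : ℕ), j + 1 = p → ∀ (l : Fin k), (J l : ℕ) = j ↔ s j ≤ (l : ℕ) := by
    intro j hj l
    rw [← hst j (by omega), ← not_lt, ht_iff]
    have := (J l).2
    omega
  have hsums : ∀ j : ℕ, ∑ i, (if h i = j then μ i else 0) = ∑ l, (if (J l : ℕ) = j then a l else 0) := by
    intro j
    have e1 : ∀ i, (if h i = j then μ i else 0) = ∑ l, if h i = j then Complex.normSq (G l i) else 0 := by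
      intro i; split_ifs
      · exact hμs i
      · simp
    have e2 : ∀ l, (if (J l : ℕ) = j then a l else 0) = ∑ i, if (J l : ℕ) = j then Complex.normSq (G l i) else 0 := by
      intro l; split_ifs
      · rw [← hG]; rfl
      · simp
    simp only [e1, e2]
    rw [Finset.sum_comm]
    refine Finset.sum_congr rfl fun l _ => Finset.sum_congr rfl fun i _ => ?_
    by_cases hz : G l i = 0
    · simp [hz]
    · rw [hsupp l i hz]
  have havg : ∀ j : Fin p, c j = ((∑ i, (if h i = j then lam i else 0)) + 
      ∑ l, (if (J l : ℕ) = j then a l else 0)) / ((s (j + 1) : ℝ) - s j) := by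
    intro j
    have hne : 0 < #{i | h i = (j : ℕ)} := by
      rw [Finset.card_pos]
      obtain ⟨i, hi⟩ := hKattain j
      exact ⟨i, by simp only [mem_filter, mem_univ, true_and]; rw [hhj]; exact hi⟩
    have e0 : (s (j + 1) : ℝ) - s j = #{i | h i = (j : ℕ)} := by rw [hKsucc]; push_cast; ring
    have hne' : (0 : ℝ) < #{i | h i = (j : ℕ)} := by exact_mod_cast hne
    rw [e0, eq_div_iff hne'.ne', ← hsums, ← Finset.sum_add_distrib]
    have : ∀ i, ((if h i = (j : ℕ) then lam i else 0) + if h i = (j : ℕ) then μ i else 0) = 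
        if h i = (j : ℕ) then c j else 0 := by
      intro i
      split_ifs with hi
      · exact ((hhj j i).mp hi).2
      · simp
    simp only [this]
    rw [← Finset.sum_filter, Finset.sum_const, nsmul_eq_mul, mul_comm]
  refine ⟨fun j => s j, ?_, ?_, ?_, ?_, ?_, ?_, ?_, ?_⟩
  · simp [hs]
  · rw [Fin.strictMono_iff_lt_succ]
    intro j
    simp only [Fin.val_castSucc, Fin.val_succ]
    rw [hKsucc]
    have hne : 0 < #{i | h i = (j : ℕ)} := by
      rw [Finset.card_pos]
      obtain ⟨i, hi⟩ := hKattain j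
      exact ⟨i, by simp only [mem_filter, mem_univ, true_and]; rw [hhj]; exact hi⟩
    omega
  · simpa using hsp
  · intro j i hi
    simp only [Fin.val_castSucc, Fin.val_succ]
    rw [← hKwin, hhj]
    simp only [hi, true_and]
    exact Iff.rfl
  · intro j l
    simp only [Fin.val_castSucc, Fin.val_succ]
    rw [hJiff]
    by_cases hj : (j : ℕ) + 1 < p
    · rw [hJwin j hj]; simp [hj]
    · rw [hJlast j (by have := j.2; omega)]; simp [hj]
  · intro i hi
    have : μ i = 0 := by
      by_contra hne
      have := (hsmu i).mp hne
      omega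
    simp [this]
  · intro j hj
    rw [havg j, initAvg]
    simp only [Fin.val_castSucc, Fin.val_succ, hKwin, hJwin j hj]
  · rw [havg ⟨p - 1, by omega⟩, finalAvg]
    have e : p - 1 + 1 = p := by omega
    simp only [hKwin, hJlast (p - 1) e, e, hsp]
    rw [add_comm]


open Matrix in
lemma perm_conj {d : ℕ} (U : Matrix (Fin d) (Fin d) ℂ) (σ : Equiv.Perm (Fin d)) (x : Fin d → ℝ) :
    (U.submatrix id σ) * rdiag (x ∘ σ) * (U.submatrix id σ)ᴴ = U * rdiag x * Uᴴ := by
  have h : rdiag (x ∘ σ) = (rdiag x).submatrix σ σ := by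
    rw [rdiag, rdiag, submatrix_diagonal_equiv]; rfl
  rw [h, conjTranspose_submatrix, submatrix_mul_equiv, submatrix_mul_equiv, submatrix_id_id]

open Matrix in
lemma perm_unit1 {d : ℕ} (U : Matrix (Fin d) (Fin d) ℂ) (σ : Equiv.Perm (Fin d)) (hU : Uᴴ * U = 1) :
    (U.submatrix id σ)ᴴ * (U.submatrix id σ) = 1 := by
  have : (U.submatrix id σ)ᴴ * (U.submatrix id σ) = (Uᴴ * U).submatrix σ σ := by
    rw [conjTranspose_submatrix]
    exact submatrix_mul_equiv Uᴴ U σ (Equiv.refl _) σ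
  rw [this, hU, submatrix_one_equiv]

lemma convex_swap {f : ℝ → ℝ} (hf : StrictConvexOn ℝ (Set.Ici 0) f) {x x' y y' : ℝ} (hx' : 0 ≤ x')
    (hy' : 0 ≤ y') (hx : x' < x) (hy : y' < y) :
    f (x + y') + f (x' + y) < f (x + y) + f (x' + y') := by
  have hA : 0 < (x - x') + (y - y') := by linarith
  have h0 : 0 < (x - x') / ((x - x') + (y - y')) := div_pos (by linarith) hA
  have h1 : 0 < (y - y') / ((x - x') + (y - y')) := div_pos (by linarith) hA
  have hs : (x - x') / ((x - x') + (y - y')) + (y - y') / ((x - x') + (y - y')) = 1 := by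
    field_simp
  have hu : x' + y' ∈ Set.Ici (0 : ℝ) := by simp only [Set.mem_Ici]; linarith
  have hv : x + y ∈ Set.Ici (0 : ℝ) := by simp only [Set.mem_Ici]; linarith
  have hne : x + y ≠ x' + y' := by linarith
  have e1 := hf.2 hv hu hne h0 h1 hs
  have e2 := hf.2 hv hu hne h1 h0 (by linarith)
  simp only [smul_eq_mul] at e1 e2
  have q1 : (x - x') / ((x - x') + (y - y')) * (x + y) + (y - y') / ((x - x') + (y - y')) * (x' + y')
      = x + y' := by field_simp; ring
  have q2 : (y - y') / ((x - x') + (y - y')) * (x + y) + (x - x') / ((x - x') + (y - y')) * (x' + y')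
      = x' + y := by field_simp; ring
  rw [q1] at e1
  rw [q2] at e2
  generalize (x - x') / ((x - x') + (y - y')) = α at *
  generalize (y - y') / ((x - x') + (y - y')) = β at *
  have hb : β = 1 - α := by linarith
  subst hb
  nlinarith

open Matrix in
/-- Simultaneous diagonalisation of the data with opposite orderings. -/
lemma anti_diag {d k : ℕ} (f : ℝ → ℝ) (hf : StrictConvexOn ℝ (Set.Ici 0) f)
    (S0 : Matrix (Fin d) (Fin d) ℂ) (hS0 : S0.PosSemidef)
    (G : Fin k → Fin d → ℂ)
    (hmin : ∀ G' : Fin k → Fin d → ℂ, (∀ i, normSqVec (G' i) = normSqVec (G i)) →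
      potential f (S0 + frameOp G) ≤ potential f (S0 + frameOp G'))
    (hcomm : S0 * frameOp G = frameOp G * S0) :
    ∃ V : Matrix (Fin d) (Fin d) ℂ, Vᴴ * V = 1 ∧ V * Vᴴ = 1 ∧
      S0 = V * rdiag (eigsAsc S0) * Vᴴ ∧ frameOp G = V * rdiag (eigsDesc (frameOp G)) * Vᴴ ∧
      Antitone (eigsDesc (frameOp G)) := by
  obtain ⟨U, x, y, hU, hU', hx, hy⟩ := spec2 S0 (frameOp G) hS0.1 (frameOp_herm G) hcomm
  have hx0 := eig_nonneg S0 U x hU hS0 hx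
  have hy0 := eig_nonneg _ U y hU (frameOp_psd G) hy
  have hadd : ∀ u v : Fin d → ℝ, U * rdiag u * Uᴴ + U * rdiag v * Uᴴ
      = U * rdiag (fun i => u i + v i) * Uᴴ := by
    intro u v
    rw [← Matrix.add_mul, ← Matrix.mul_add]
    congr 2
    rw [rdiag, rdiag, rdiag, diagonal_add]
    congr 1; ext i; simp
  have hanti : ∀ i j, y j < y i → x i ≤ x j := by
    intro i j hij
    by_contra hlt
    push Not at hlt
    have hne : i ≠ j := by rintro rfl; exact lt_irrefl _ hij
    set σ := Equiv.swap i j with hσ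
    set W := U.submatrix id σ with hW
    have hWu : Wᴴ * W = 1 := perm_unit1 U σ hU
    have hm := hmin (fun l => (W * Uᴴ) *ᵥ G l) (by
      intro l
      apply normSqVec_unitary
      rw [conjTranspose_mul, conjTranspose_conjTranspose, Matrix.mul_assoc, ← Matrix.mul_assoc Wᴴ,
        hWu, Matrix.one_mul, hU'])
    have h1 : frameOp (fun l => (W * Uᴴ) *ᵥ G l) = U * rdiag (y ∘ σ) * Uᴴ := by
      rw [frameOp_conj]
      have : (W * Uᴴ) * frameOp G * (W * Uᴴ)ᴴ = W * (Uᴴ * frameOp G * U) * Wᴴ := by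
        rw [conjTranspose_mul, conjTranspose_conjTranspose]; simp only [Matrix.mul_assoc]
      rw [this, conj_back hU hy, ← perm_conj U σ (y ∘ σ)]
      congr 3
      ext m; simp [hσ]
    rw [h1, hy, hx, hadd, hadd, potential_conj _ _ hU, potential_conj _ _ hU] at hm
    have hsplit : ∀ g : Fin d → ℝ, ∑ m, g m = g i + g j + ∑ m ∈ (univ.erase i).erase j, g m := by
      intro g
      rw [← Finset.add_sum_erase univ g (mem_univ i),
        ← Finset.add_sum_erase (univ.erase i) g (show j ∈ univ.erase i by simp [hne.symm])]
      ring
    rw [hsplit (fun m => f (x m + y m)), hsplit] at hm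
    have hrest : ∑ m ∈ (univ.erase i).erase j, f (x m + (y ∘ σ) m)
        = ∑ m ∈ (univ.erase i).erase j, f (x m + y m) := by
      refine Finset.sum_congr rfl fun m hm => ?_
      simp only [mem_erase, mem_univ, and_true] at hm
      simp [hσ, Equiv.swap_apply_of_ne_of_ne hm.2 hm.1]
    rw [hrest] at hm
    simp only [Function.comp, hσ, Equiv.swap_apply_left, Equiv.swap_apply_right] at hm
    have := convex_swap hf (hx0 j) (hy0 j) hlt hij
    linarith
  set key : Fin d → ℝ ×ₗ ℝ := fun i => toLex (-y i, x i) with hkey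
  set σ := Tuple.sort key with hσ
  have hmono : Monotone (key ∘ σ) := Tuple.monotone_sort key
  have hle : ∀ i j, i ≤ j → y (σ j) < y (σ i) ∨ (y (σ i) = y (σ j) ∧ x (σ i) ≤ x (σ j)) := by
    intro i j hij
    have := hmono hij
    simp only [Function.comp, hkey, Prod.Lex.toLex_le_toLex] at this
    rcases this with h | h
    · left; linarith
    · right; exact ⟨by linarith [h.1], h.2⟩
  have hxm : Monotone (x ∘ σ) := by
    intro i j hij
    rcases hle i j hij with h | h
    · exact hanti _ _ h
    · exact h.2
  have hya : Antitone (y ∘ σ) := by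
    intro i j hij
    rcases hle i j hij with h | h
    · exact h.le
    · exact h.1.ge
  have hV := perm_unit1 U σ hU
  have ex : S0 = (U.submatrix id σ) * rdiag (x ∘ σ) * (U.submatrix id σ)ᴴ := by
    rw [perm_conj, hx]
  have ey : frameOp G = (U.submatrix id σ) * rdiag (y ∘ σ) * (U.submatrix id σ)ᴴ := by
    rw [perm_conj, hy]
  have ex' : eigsAsc S0 = x ∘ σ := by rw [ex, eigsAsc_conj _ hV _ hxm]
  have ey' : eigsDesc (frameOp G) = y ∘ σ := by rw [ey, eigsDesc_conj _ hV _ hya]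
  refine ⟨U.submatrix id σ, hV, mul_eq_one_comm.mp hV, ?_, ?_, ?_⟩
  · rw [ex']; exact ex
  · rw [ey']; exact ey
  · rw [ey']; exact hya

theorem stmt_11 {d n₀ k : ℕ} (hdk : d ≤ k)
    (F₀ : Fin n₀ → Fin d → ℂ) (a : Fin k → ℝ)
    (ha_pos : ∀ i, 0 < a i) (ha_mono : Antitone a)
    (f : ℝ → ℝ) (hf : StrictConvexOn ℝ (Set.Ici 0) f) (hf0 : ∀ x ∈ Set.Ici (0 : ℝ), 0 ≤ f x)
    (G : Fin k → Fin d → ℂ) (hG : ∀ i, normSqVec (G i) = a i)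
    (hmin : ∀ G' : Fin k → Fin d → ℂ, (∀ i, normSqVec (G' i) = a i) →
      potential f (frameOp F₀ + frameOp G) ≤ potential f (frameOp F₀ + frameOp G'))
    (lam μ : Fin d → ℝ) (hlam : lam = eigsAsc (frameOp F₀)) (hμ : μ = eigsDesc (frameOp G))
    (sF : ℕ) (hsF : sF = (frameOp G).rank)
    (hsmu : ∀ i : Fin d, μ i ≠ 0 ↔ (i : ℕ) < sF)
    (p : ℕ) (hp : 0 < p) (c : Fin p → ℝ) (hcanti : StrictAnti c) (hcpos : ∀ j, 0 < c j)
    (hKcover : ∀ i : Fin d, (i : ℕ) < sF → ∃ j : Fin p, lam i + μ i = c j)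
    (hKattain : ∀ j : Fin p, ∃ i : Fin d, (i : ℕ) < sF ∧ lam i + μ i = c j)
    (hJcover : ∀ l : Fin k, ∃ j : Fin p,
      (frameOp F₀ + frameOp G).mulVec (G l) = (c j : ℂ) • G l) :
    ∃ s : Fin (p + 1) → ℕ, s 0 = 0 ∧ StrictMono s ∧ s (Fin.last p) = sF ∧
      (∀ j : Fin p, ∀ i : Fin d, (i : ℕ) < sF →
        (lam i + μ i = c j ↔ s j.castSucc ≤ (i : ℕ) ∧ (i : ℕ) < s j.succ)) ∧
      (∀ j : Fin p, ∀ l : Fin k,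
        ((frameOp F₀ + frameOp G).mulVec (G l) = (c j : ℂ) • G l ↔
          s j.castSucc ≤ (l : ℕ) ∧ ((j : ℕ) + 1 < p → (l : ℕ) < s j.succ))) ∧
      (∀ i : Fin d, sF ≤ (i : ℕ) → lam i + μ i = lam i) ∧
      (∀ j : Fin p, (j : ℕ) + 1 < p → c j = initAvg lam a (s j.castSucc) (s j.succ)) ∧
      c ⟨p - 1, by omega⟩ = finalAvg lam a (s ⟨p - 1, by omega⟩) sF := by
  have hSh : (frameOp F₀ + frameOp G).conjTranspose = frameOp F₀ + frameOp G := by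
    rw [Matrix.conjTranspose_add, frameOp_herm, frameOp_herm]
  have hmin' : ∀ G' : Fin k → Fin d → ℂ, (∀ i, normSqVec (G' i) = normSqVec (G i)) →
      potential f (frameOp F₀ + frameOp G) ≤ potential f (frameOp F₀ + frameOp G') :=
    fun G' h => hmin G' fun i => (h i).trans (hG i)
  have hcomm : frameOp F₀ * frameOp G = frameOp G * frameOp F₀ := by
    have h1 : (frameOp F₀ + frameOp G) * frameOp G = frameOp G * (frameOp F₀ + frameOp G) := by
      generalize frameOp F₀ + frameOp G = S at *
      rw [frameOp, Matrix.mul_sum, Matrix.sum_mul]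
      refine Finset.sum_congr rfl fun l _ => ?_
      obtain ⟨j, hj⟩ := hJcover l
      have := vmv_mul_of_eig hSh hj
      rw [this.1, this.2]
    rw [Matrix.add_mul, Matrix.mul_add] at h1
    exact add_right_cancel h1
  obtain ⟨V, hV, hV', h0, hg, hanti⟩ := anti_diag f hf _ (frameOp_psd F₀) G hmin' hcomm
  rw [← hlam] at h0
  rw [← hμ] at hg hanti
  have hV'' : V.conjTranspose.conjTranspose * V.conjTranspose = 1 := by
    rw [Matrix.conjTranspose_conjTranspose]; exact hV'
  have hS : frameOp F₀ + frameOp G = V * rdiag (fun i => lam i + μ i) * V.conjTranspose := by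
    rw [h0, hg, ← Matrix.add_mul, ← Matrix.mul_add]
    congr 2
    rw [rdiag, rdiag, rdiag, Matrix.diagonal_add]
    congr 1; ext i; simp
  have hiff : ∀ (l : Fin k) (c : ℝ), (frameOp F₀ + frameOp G).mulVec (G l) = (c : ℂ) • G l ↔
      ∀ m, V.conjTranspose.mulVec (G l) m ≠ 0 → lam m + μ m = c := by
    intro l c
    constructor
    · intro h m hm
      exact eig_coord hV hS h m hm
    · intro h
      have h1 := rdiag_mulVec_eig (fun i => lam i + μ i) _ c h
      rw [hS, ← Matrix.mulVec_mulVec, ← Matrix.mulVec_mulVec, h1, Matrix.mulVec_smul,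
        Matrix.mulVec_mulVec, hV', Matrix.one_mulVec]
  have hF : frameOp (fun l => V.conjTranspose.mulVec (G l)) = rdiag μ := by
    rw [frameOp_conj, Matrix.conjTranspose_conjTranspose]
    exact conj_back hV hg
  have hpot : ∀ G' : Fin k → Fin d → ℂ, potential f (rdiag lam + frameOp G')
      = potential f (frameOp F₀ + frameOp (fun l => V.mulVec (G' l))) := by
    intro G'
    rw [frameOp_conj, h0, ← Matrix.add_mul, ← Matrix.mul_add, potential_unitary f V _ hV]
    rw [Matrix.conjTranspose_add, frameOp_herm, rdiag_herm]
  have hGV : (fun l => V.mulVec (V.conjTranspose.mulVec (G l))) = G := by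
    ext l m
    rw [Matrix.mulVec_mulVec, hV', Matrix.one_mulVec]
  have hfin := core f hf (rdiag lam) (by
      rw [← conj_back hV h0]
      exact (frameOp_psd F₀).conjTranspose_mul_mul_same V) a ha_pos ha_mono
    (fun l => V.conjTranspose.mulVec (G l)) (fun i => by
      rw [normSqVec_unitary _ hV'', hG]) (by
      intro G' hG'
      rw [hpot, hpot, hGV]
      apply hmin'
      intro i
      rw [normSqVec_unitary _ hV, hG', normSqVec_unitary _ hV'']) lam μ rfl hF hanti sF
    (by rw [hsF]; simpa using (frameOp G).rank_le_width) hsmu p hp c hcanti hKcover hKattain (by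
      intro l
      obtain ⟨j, hj⟩ := hJcover l
      exact ⟨j, (hiff l (c j)).mp hj⟩)
  simp only [hiff]
  exact hfin
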